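/- arXiv:2207.07009 — 4 statements merged into one kernel-verified Lean document; each statement's English description precedes it below -/
import Mathlib

section
/- Under the adapted pure-frontal setup with focal data, assume moreover that x_j is nowhere zero (so e_j = x_j/‖x_j‖ is a unit normal of C_j). Then for j = 1,2, a point q is a singular point of the focal surface C_j (i.e. rank d(C_j)_q ≤ 1) if and only if (V_jρ_j)(q) = 0, where V_jρ_j = −v(M̃−κ_jF̃)·(ρ_j)_u + (L̃−κ_jẼ)·(ρ_j)_v is the derivative of ρ_j along the principal vector field V_j. -/
open Filter

noncomputable section

/-- Vectors in ℝ³, modeled as `Fin 3 → ℝ`. -/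
abbrev R3 : Type := Fin 3 → ℝ

/-- The Euclidean inner product on ℝ³. -/
def dot3 (a b : R3) : ℝ := a 0 * b 0 + a 1 * b 1 + a 2 * b 2

/-- The Euclidean norm on ℝ³. -/
def norm3 (a : R3) : ℝ := Real.sqrt (dot3 a a)

/-- Partial derivative in the `u`-direction. -/
def pu {E : Type*} [NormedAddCommGroup E] [NormedSpace ℝ E] (F : ℝ × ℝ → E) (p : ℝ × ℝ) : E :=
  fderiv ℝ F p (1, 0)

/-- Partial derivative in the `v`-direction. -/
def pv {E : Type*} [NormedAddCommGroup E] [NormedSpace ℝ E] (F : ℝ × ℝ → E) (p : ℝ × ℝ) : E :=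
  fderiv ℝ F p (0, 1)

/-- The adapted pure-frontal setup: `f` is a frontal with unit normal `ν`,
`f_v = v·h`, `ν_v = v·ν₁`, the frame `{f_u, h, ν}` is linearly independent everywhere
and orthonormal along the `u`-axis. -/
structure AdaptedPureFrontal (f ν h ν₁ : ℝ × ℝ → R3) : Prop where
  smooth_f : ContDiff ℝ (⊤ : ℕ∞) f
  smooth_ν : ContDiff ℝ (⊤ : ℕ∞) ν
  smooth_h : ContDiff ℝ (⊤ : ℕ∞) h
  smooth_ν₁ : ContDiff ℝ (⊤ : ℕ∞) ν₁
  unit_ν : ∀ p, dot3 (ν p) (ν p) = 1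
  orth_fu_ν : ∀ p, dot3 (pu f p) (ν p) = 0
  orth_fv_ν : ∀ p, dot3 (pv f p) (ν p) = 0
  fv_eq : ∀ p : ℝ × ℝ, pv f p = p.2 • h p
  νv_eq : ∀ p : ℝ × ℝ, pv ν p = p.2 • ν₁ p
  indep : ∀ p, LinearIndependent ℝ ![pu f p, h p, ν p]
  adapted_fu : ∀ u : ℝ, dot3 (pu f (u, 0)) (pu f (u, 0)) = 1
  adapted_h : ∀ u : ℝ, dot3 (h (u, 0)) (h (u, 0)) = 1
  adapted_fu_h : ∀ u : ℝ, dot3 (pu f (u, 0)) (h (u, 0)) = 0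
  adapted_h_ν : ∀ u : ℝ, dot3 (h (u, 0)) (ν (u, 0)) = 0

/-- Ẽ = ⟨f_u, f_u⟩. -/
def Et (f : ℝ × ℝ → R3) (p : ℝ × ℝ) : ℝ := dot3 (pu f p) (pu f p)

/-- F̃ = ⟨f_u, h⟩. -/
def Ft (f h : ℝ × ℝ → R3) (p : ℝ × ℝ) : ℝ := dot3 (pu f p) (h p)

/-- G̃ = ⟨h, h⟩. -/
def Gt (h : ℝ × ℝ → R3) (p : ℝ × ℝ) : ℝ := dot3 (h p) (h p)

/-- L̃ = −⟨f_u, ν_u⟩. -/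
def Lt (f ν : ℝ × ℝ → R3) (p : ℝ × ℝ) : ℝ := -dot3 (pu f p) (pu ν p)

/-- M̃ = −⟨h, ν_u⟩. -/
def Mt (h ν : ℝ × ℝ → R3) (p : ℝ × ℝ) : ℝ := -dot3 (h p) (pu ν p)

/-- Ñ₁ = −⟨h, ν₁⟩. -/
def Nt1 (h ν₁ : ℝ × ℝ → R3) (p : ℝ × ℝ) : ℝ := -dot3 (h p) (ν₁ p)

/-- The Gaussian curvature K = (L̃Ñ₁ − M̃²)/(ẼG̃ − F̃²). -/
def Kg (f ν h ν₁ : ℝ × ℝ → R3) (p : ℝ × ℝ) : ℝ :=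
  (Lt f ν p * Nt1 h ν₁ p - Mt h ν p ^ 2) / (Et f p * Gt h p - Ft f h p ^ 2)

/-- The mean curvature H = (ẼÑ₁ − 2F̃M̃ + G̃L̃)/(2(ẼG̃ − F̃²)). -/
def Hm (f ν h ν₁ : ℝ × ℝ → R3) (p : ℝ × ℝ) : ℝ :=
  (Et f p * Nt1 h ν₁ p - 2 * Ft f h p * Mt h ν p + Gt h p * Lt f ν p) /
    (2 * (Et f p * Gt h p - Ft f h p ^ 2))

/-- The principal curvature κ = H + ε√(H² − K); `ε = 1` gives κ₁ and `ε = -1` gives κ₂. -/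
def kap (f ν h ν₁ : ℝ × ℝ → R3) (ε : ℝ) (p : ℝ × ℝ) : ℝ :=
  Hm f ν h ν₁ p + ε * Real.sqrt (Hm f ν h ν₁ p ^ 2 - Kg f ν h ν₁ p)

/-- First component of the principal vector field V = −v(M̃ − κF̃)∂_u + (L̃ − κẼ)∂_v. -/
def V1c (f ν h ν₁ : ℝ × ℝ → R3) (ε : ℝ) (p : ℝ × ℝ) : ℝ :=
  -(p.2 * (Mt h ν p - kap f ν h ν₁ ε p * Ft f h p))

/-- Second component of the principal vector field V = −v(M̃ − κF̃)∂_u + (L̃ − κẼ)∂_v. -/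
def V2c (f ν h ν₁ : ℝ × ℝ → R3) (ε : ℝ) (p : ℝ × ℝ) : ℝ :=
  Lt f ν p - kap f ν h ν₁ ε p * Et f p

/-- Directional derivative of `g` along the principal vector field V. -/
def VD (f ν h ν₁ : ℝ × ℝ → R3) (ε : ℝ) {E : Type*} [NormedAddCommGroup E] [NormedSpace ℝ E]
    (g : ℝ × ℝ → E) (p : ℝ × ℝ) : E :=
  V1c f ν h ν₁ ε p • pu g p + V2c f ν h ν₁ ε p • pv g p

/-- The radius of principal curvature ρ = 1/κ. -/
def rho (f ν h ν₁ : ℝ × ℝ → R3) (ε : ℝ) (p : ℝ × ℝ) : ℝ := (kap f ν h ν₁ ε p)⁻¹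

/-- The focal surface C = f + ρ·ν. -/
def Cf (f ν h ν₁ : ℝ × ℝ → R3) (ε : ℝ) (p : ℝ × ℝ) : R3 :=
  f p + rho f ν h ν₁ ε p • ν p

/-- The normal direction x = −(M̃ − κF̃)·f_u + (L̃ − κẼ)·h of the focal surface. -/
def xj (f ν h ν₁ : ℝ × ℝ → R3) (ε : ℝ) (p : ℝ × ℝ) : R3 :=
  (-(Mt h ν p - kap f ν h ν₁ ε p * Ft f h p)) • pu f p +
    (Lt f ν p - kap f ν h ν₁ ε p * Et f p) • h p

/-- The unit normal e = x/‖x‖ of the focal surface. -/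
def ej (f ν h ν₁ : ℝ × ℝ → R3) (ε : ℝ) (p : ℝ × ℝ) : R3 :=
  (norm3 (xj f ν h ν₁ ε p))⁻¹ • xj f ν h ν₁ ε p

/-- The limiting normal curvature κ_ν(u) = L̃(u,0). -/
def kν (f ν : ℝ × ℝ → R3) (u : ℝ) : ℝ := Lt f ν (u, 0)

/-- The cuspidal torsion κ_t(u) = M̃(u,0). -/
def kt (h ν : ℝ × ℝ → R3) (u : ℝ) : ℝ := Mt h ν (u, 0)

/-- The bias r_b(u) = 3Ñ₁(u,0). -/
def rb (h ν₁ : ℝ × ℝ → R3) (u : ℝ) : ℝ := 3 * Nt1 h ν₁ (u, 0)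

/-- The secondary cuspidal curvature r_c(u) = 24((Ñ₁)_v − 2F̃_vM̃ − G̃_vÑ₁)(u,0). -/
def rc (f ν h ν₁ : ℝ × ℝ → R3) (u : ℝ) : ℝ :=
  24 * (pv (Nt1 h ν₁) (u, 0) - 2 * pv (Ft f h) (u, 0) * Mt h ν (u, 0) -
    pv (Gt h) (u, 0) * Nt1 h ν₁ (u, 0))

/-- The singular curvature κ_s(u) = ⟨f_uu, h⟩(u,0). -/
def ks (f h : ℝ × ℝ → R3) (u : ℝ) : ℝ := dot3 (pu (pu f) (u, 0)) (h (u, 0))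

/-- The rank of the differential of `F` at `p`. -/
def rankAt (F : ℝ × ℝ → R3) (p : ℝ × ℝ) : ℕ :=
  Module.finrank ℝ (LinearMap.range (fderiv ℝ F p).toLinearMap)

lemma aux_smooth_dir (F : ℝ × ℝ → R3) (hF : ContDiff ℝ (⊤ : ℕ∞) F) (w : ℝ × ℝ) :
    ContDiff ℝ (⊤ : ℕ∞) (fun p => fderiv ℝ F p w) := by
  have h1 : ContDiff ℝ (⊤ : ℕ∞) (fderiv ℝ F) := hF.fderiv_right (by simp)
  exact h1.clm_apply contDiff_const

lemma aux_smooth_pu (F : ℝ × ℝ → R3) (hF : ContDiff ℝ (⊤ : ℕ∞) F) :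
    ContDiff ℝ (⊤ : ℕ∞) (pu F) := aux_smooth_dir F hF (1, 0)

lemma aux_smooth_pv (F : ℝ × ℝ → R3) (hF : ContDiff ℝ (⊤ : ℕ∞) F) :
    ContDiff ℝ (⊤ : ℕ∞) (pv F) := aux_smooth_dir F hF (0, 1)

lemma aux_smooth_dot (F G : ℝ × ℝ → R3) (hF : ContDiff ℝ (⊤ : ℕ∞) F)
    (hG : ContDiff ℝ (⊤ : ℕ∞) G) : ContDiff ℝ (⊤ : ℕ∞) (fun p => dot3 (F p) (G p)) := by
  have a := contDiff_pi.1 hF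
  have b := contDiff_pi.1 hG
  unfold dot3
  exact (((a 0).mul (b 0)).add ((a 1).mul (b 1))).add ((a 2).mul (b 2))

lemma aux_fderiv_dot (F G : ℝ × ℝ → R3) (hF : ContDiff ℝ (⊤ : ℕ∞) F)
    (hG : ContDiff ℝ (⊤ : ℕ∞) G) (c : ℝ) (hc : ∀ p, dot3 (F p) (G p) = c) (p w : ℝ × ℝ) :
    dot3 (fderiv ℝ F p w) (G p) + dot3 (F p) (fderiv ℝ G p w) = 0 := by
  have a := hasFDerivAt_pi'.1 ((hF.differentiable (by simp)) p).hasFDerivAt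
  have b := hasFDerivAt_pi'.1 ((hG.differentiable (by simp)) p).hasFDerivAt
  have e := (((a 0).mul (b 0)).add ((a 1).mul (b 1))).add ((a 2).mul (b 2))
  have e2 : HasFDerivAt (fun p => dot3 (F p) (G p)) (0 : ℝ × ℝ →L[ℝ] ℝ) p := by
    simp only [hc]; exact hasFDerivAt_const c p
  have e3 := congrArg (fun T : ℝ × ℝ →L[ℝ] ℝ => T w) (e.unique e2)
  simp at e3
  unfold dot3
  linarith

lemma aux_symm (F : ℝ × ℝ → R3) (hF : ContDiff ℝ (⊤ : ℕ∞) F) (p : ℝ × ℝ) :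
    pv (pu F) p = pu (pv F) p := by
  have h1 : ContDiff ℝ (⊤ : ℕ∞) (fderiv ℝ F) := hF.fderiv_right (by simp)
  have h2 : DifferentiableAt ℝ (fderiv ℝ F) p := h1.differentiable (by simp) p
  have hs : IsSymmSndFDerivAt ℝ F p := hF.contDiffAt.isSymmSndFDerivAt (by
    simp only [minSmoothness_of_isRCLikeNormedField]; exact WithTop.coe_le_coe.2 (le_top : (2 : ℕ∞) ≤ ⊤))
  have k (a b : ℝ × ℝ) : fderiv ℝ (fun q => fderiv ℝ F q a) p b = fderiv ℝ (fderiv ℝ F) p b a := by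
    have := h2.hasFDerivAt.clm_apply (hasFDerivAt_const a p)
    rw [this.fderiv]; simp
  have := hs (0, 1) (1, 0)
  rw [← k, ← k] at this
  exact this

lemma aux_div (g : ℝ × ℝ → ℝ) (hg : Continuous g) (h : ∀ p : ℝ × ℝ, p.2 * g p = 0) (p : ℝ × ℝ) :
    g p = 0 := by
  have hd : Dense {x : ℝ | x ≠ 0} := dense_compl_singleton 0
  have hc : Continuous (fun x : ℝ => g (p.1, x)) := by fun_prop
  have : (fun x : ℝ => g (p.1, x)) = fun _ => 0 := by
    refine Continuous.ext_on hd hc continuous_const ?_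
    intro x hx
    exact (mul_eq_zero.1 (h (p.1, x))).resolve_left hx
  exact congrFun this p.2

lemma aux_orth (a b c w : R3) (hi : LinearIndependent ℝ ![a, b, c]) (h1 : dot3 a w = 0)
    (h2 : dot3 b w = 0) (h3 : dot3 c w = 0) : w = 0 := by
  have hu : IsUnit (Matrix.of ![a, b, c]) := Matrix.linearIndependent_rows_iff_isUnit.1 hi
  apply Matrix.mulVec_injective_of_isUnit hu
  unfold dot3 at *
  ext i
  fin_cases i <;> simp [Matrix.mulVec, dotProduct, Fin.sum_univ_three] <;> assumption

lemma aux_rank (T : ℝ × ℝ →L[ℝ] R3) (s t r : ℝ) (ν a fu : R3) (ht : t ≠ 0)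
    (hT : T (s, t) = r • ν) (hu : dot3 fu (T (1, 0)) ≠ 0) (hν : ν ≠ 0)
    (hfν : dot3 fu ν = 0) :
    Module.finrank ℝ (LinearMap.range T.toLinearMap) ≤ 1 ↔ r = 0 := by
  have hrn := LinearMap.finrank_range_add_finrank_ker T.toLinearMap
  have h2 : Module.finrank ℝ (ℝ × ℝ) = 2 := by simp
  rw [h2] at hrn
  constructor
  · intro hle
    by_contra hr
    have hker : LinearMap.ker T.toLinearMap = ⊥ := by
      rw [LinearMap.ker_eq_bot']
      rintro ⟨x, y⟩ hxy
      have e : ((x, y) : ℝ × ℝ) = (x - y / t * s) • ((1, 0) : ℝ × ℝ) + (y / t) • ((s, t) : ℝ × ℝ) := by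
        ext <;> simp; field_simp
      have hxy' : T (x, y) = 0 := hxy
      rw [e, map_add, map_smul, map_smul, hT] at hxy'
      have d : dot3 fu ((x - y / t * s) • T (1, 0) + (y / t) • r • ν) = 0 := by
        rw [hxy']; simp [dot3]
      have d2 : (x - y / t * s) * dot3 fu (T (1, 0)) = 0 := by
        have : (x - y / t * s) * dot3 fu (T (1, 0)) + (y / t) * r * dot3 fu ν = 0 := by
          have e1 (a x y : R3) (m n k : ℝ) : dot3 a (m • x + n • k • y) =
              m * dot3 a x + n * k * dot3 a y := by simp [dot3]; ring
          rw [← e1]; exact d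
        rw [hfν] at this; linarith
      have d3 := (mul_eq_zero.1 d2).resolve_right hu
      rw [d3] at hxy'
      have d4 : y = 0 := by simpa [hr, hν, ht] using hxy'
      subst d4
      simp at d3
      simp [d3]
    rw [hker, finrank_bot] at hrn
    omega
  · intro hr
    have hmem : (s, t) ∈ LinearMap.ker T.toLinearMap := by
      simp [hT, hr]
    have : 0 < Module.finrank ℝ (LinearMap.ker T.toLinearMap) := by
      apply Module.finrank_pos_iff_exists_ne_zero.2
      refine ⟨⟨_, hmem⟩, ?_⟩
      intro h0
      exact ht (congrArg Prod.snd (congrArg Subtype.val h0))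
    omega

/-- a point q is a singular point of the focal surface C_j iff
(V_jρ_j)(q) = 0. -/
theorem stmt_10 (f ν h ν₁ : ℝ × ℝ → R3) (H : AdaptedPureFrontal f ν h ν₁)
    (ε : ℝ) (hε : ε = 1 ∨ ε = -1)
    (hHK : ∀ p : ℝ × ℝ, Hm f ν h ν₁ p ^ 2 - Kg f ν h ν₁ p > 0)
    (hκ : ∀ p : ℝ × ℝ, kap f ν h ν₁ ε p ≠ 0)
    (hx : ∀ p : ℝ × ℝ, xj f ν h ν₁ ε p ≠ 0) :
    ∀ q : ℝ × ℝ,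
      rankAt (Cf f ν h ν₁ ε) q ≤ 1 ↔ VD f ν h ν₁ ε (rho f ν h ν₁ ε) q = 0 := by
  intro q
  have sfu := aux_smooth_pu f H.smooth_f
  have sfv := aux_smooth_pv f H.smooth_f
  have snu := aux_smooth_pu ν H.smooth_ν
  have hhν : ∀ p, dot3 (h p) (ν p) = 0 := by
    apply aux_div _ (aux_smooth_dot _ _ H.smooth_h H.smooth_ν).continuous
    intro p
    rw [← H.orth_fv_ν p, H.fv_eq p]; simp [dot3]; ring
  have hνuν : ∀ p, dot3 (ν p) (pu ν p) = 0 := by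
    intro p
    have := aux_fderiv_dot ν ν H.smooth_ν H.smooth_ν 1 H.unit_ν p (1, 0)
    unfold pu dot3 at *; linarith
  have hνν₁ : ∀ p, dot3 (ν p) (ν₁ p) = 0 := by
    apply aux_div _ (aux_smooth_dot _ _ H.smooth_ν H.smooth_ν₁).continuous
    intro p
    have := aux_fderiv_dot ν ν H.smooth_ν H.smooth_ν 1 H.unit_ν p (0, 1)
    have e := H.νv_eq p
    unfold pv at e
    rw [e] at this
    simp only [dot3, Pi.smul_apply, smul_eq_mul] at this ⊢
    linear_combination this / 2
  have hM : ∀ p, dot3 (pu f p) (ν₁ p) - dot3 (h p) (pu ν p) = 0 := by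
    apply aux_div _ ((aux_smooth_dot _ _ sfu H.smooth_ν₁).continuous.sub
      (aux_smooth_dot _ _ H.smooth_h snu).continuous)
    intro p
    have e1 := aux_fderiv_dot (pu f) ν sfu H.smooth_ν 0 H.orth_fu_ν p (0, 1)
    have e2 := aux_fderiv_dot (pv f) ν sfv H.smooth_ν 0 H.orth_fv_ν p (1, 0)
    have e3 := aux_symm f H.smooth_f p
    change dot3 (pv (pu f) p) (ν p) + dot3 (pu f p) (pv ν p) = 0 at e1
    change dot3 (pu (pv f) p) (ν p) + dot3 (pv f p) (pu ν p) = 0 at e2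
    rw [e3, H.νv_eq] at e1
    rw [H.fv_eq p] at e2
    have e4 : dot3 (pu f p) (p.2 • ν₁ p) = p.2 * dot3 (pu f p) (ν₁ p) := by simp [dot3]; ring
    have e5 : dot3 (p.2 • h p) (pu ν p) = p.2 * dot3 (h p) (pu ν p) := by simp [dot3]; ring
    rw [e4] at e1
    rw [e5] at e2
    change p.2 * (dot3 (pu f p) (ν₁ p) - dot3 (h p) (pu ν p)) = 0
    linarith
  -- the metric determinant is nonzero
  have hW : ∀ p, Et f p * Gt h p - Ft f h p ^ 2 ≠ 0 := by
    intro p h0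
    have := hHK p
    simp [Hm, Kg, h0] at this
  have sE : ContDiff ℝ (⊤ : ℕ∞) (Et f) := aux_smooth_dot _ _ sfu sfu
  have sF : ContDiff ℝ (⊤ : ℕ∞) (Ft f h) := aux_smooth_dot _ _ sfu H.smooth_h
  have sG : ContDiff ℝ (⊤ : ℕ∞) (Gt h) := aux_smooth_dot _ _ H.smooth_h H.smooth_h
  have sL : ContDiff ℝ (⊤ : ℕ∞) (Lt f ν) := (aux_smooth_dot _ _ sfu snu).neg
  have sM : ContDiff ℝ (⊤ : ℕ∞) (Mt h ν) := (aux_smooth_dot _ _ H.smooth_h snu).neg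
  have sN : ContDiff ℝ (⊤ : ℕ∞) (Nt1 h ν₁) := (aux_smooth_dot _ _ H.smooth_h H.smooth_ν₁).neg
  have dE : Differentiable ℝ (Et f) := sE.differentiable (by simp)
  have dF : Differentiable ℝ (Ft f h) := sF.differentiable (by simp)
  have dG : Differentiable ℝ (Gt h) := sG.differentiable (by simp)
  have dL : Differentiable ℝ (Lt f ν) := sL.differentiable (by simp)
  have dM : Differentiable ℝ (Mt h ν) := sM.differentiable (by simp)
  have dN : Differentiable ℝ (Nt1 h ν₁) := sN.differentiable (by simp)
  have dW : Differentiable ℝ (fun p => Et f p * Gt h p - Ft f h p ^ 2) := by fun_prop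
  have dH : Differentiable ℝ (Hm f ν h ν₁) := by
    unfold Hm
    intro p
    simp only [div_eq_mul_inv]
    refine DifferentiableAt.fun_mul (by fun_prop) (DifferentiableAt.fun_inv (by fun_prop) ?_)
    exact mul_ne_zero two_ne_zero (hW p)
  have dK : Differentiable ℝ (Kg f ν h ν₁) := by
    unfold Kg
    intro p
    simp only [div_eq_mul_inv]
    refine DifferentiableAt.fun_mul (by fun_prop) (DifferentiableAt.fun_inv (by fun_prop) ?_)
    exact hW p
  have dk : Differentiable ℝ (kap f ν h ν₁ ε) := by
    unfold kap
    refine dH.add (Differentiable.const_mul ?_ ε)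
    exact Differentiable.sqrt (by fun_prop) (fun p => (hHK p).ne')
  have dr : DifferentiableAt ℝ (rho f ν h ν₁ ε) q := by
    unfold rho
    exact (dk q).fun_inv (hκ q)
  have df : DifferentiableAt ℝ f q := H.smooth_f.differentiable (by simp) q
  have dν : DifferentiableAt ℝ ν q := H.smooth_ν.differentiable (by simp) q
  have hC : ∀ w, fderiv ℝ (Cf f ν h ν₁ ε) q w = fderiv ℝ f q w +
      (rho f ν h ν₁ ε q • fderiv ℝ ν q w + fderiv ℝ (rho f ν h ν₁ ε) q w • ν q) := by
    intro w
    have := (df.hasFDerivAt.add (dr.hasFDerivAt.smul dν.hasFDerivAt)).fderiv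
    have e : Cf f ν h ν₁ ε = f + rho f ν h ν₁ ε • ν := rfl
    rw [e, this]; simp
  -- characteristic equation
  have hq : (Lt f ν q - kap f ν h ν₁ ε q * Et f q) * (Nt1 h ν₁ q - kap f ν h ν₁ ε q * Gt h q)
      = (Mt h ν q - kap f ν h ν₁ ε q * Ft f h q) ^ 2 := by
    have hs := Real.sq_sqrt (hHK q).le
    have h1 : (kap f ν h ν₁ ε q - Hm f ν h ν₁ q) ^ 2 = Hm f ν h ν₁ q ^ 2 - Kg f ν h ν₁ q := by
      rw [← hs]; unfold kap
      rcases hε with rfl | rfl <;> ring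
    have h2 : Hm f ν h ν₁ q * (2 * (Et f q * Gt h q - Ft f h q ^ 2)) =
        Et f q * Nt1 h ν₁ q - 2 * Ft f h q * Mt h ν q + Gt h q * Lt f ν q :=
      div_mul_cancel₀ _ (mul_ne_zero two_ne_zero (hW q))
    have h3 : Kg f ν h ν₁ q * (Et f q * Gt h q - Ft f h q ^ 2) =
        Lt f ν q * Nt1 h ν₁ q - Mt h ν q ^ 2 := div_mul_cancel₀ _ (hW q)
    linear_combination (Et f q * Gt h q - Ft f h q ^ 2) * h1 - h3 + kap f ν h ν₁ ε q * h2
  have hx' := hx q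
  have hr : rho f ν h ν₁ ε q * kap f ν h ν₁ ε q = 1 := inv_mul_cancel₀ (hκ q)
  have hr0 : rho f ν h ν₁ ε q ≠ 0 := inv_ne_zero (hκ q)
  have hMq := hM q
  have hA : Lt f ν q - kap f ν h ν₁ ε q * Et f q ≠ 0 := by
    intro h0
    have : Mt h ν q - kap f ν h ν₁ ε q * Ft f h q = 0 := by
      rw [h0, zero_mul] at hq; exact pow_eq_zero_iff two_ne_zero |>.1 hq.symm
    apply hx'
    simp [xj, h0, this]
  have hVD : VD f ν h ν₁ ε (rho f ν h ν₁ ε) q =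
      V1c f ν h ν₁ ε q * fderiv ℝ (rho f ν h ν₁ ε) q (1, 0) +
      V2c f ν h ν₁ ε q * fderiv ℝ (rho f ν h ν₁ ε) q (0, 1) := rfl
  have hfv : fderiv ℝ f q (0, 1) = q.2 • h q := H.fv_eq q
  have hνv : fderiv ℝ ν q (0, 1) = q.2 • ν₁ q := H.νv_eq q
  have hw : (-(Mt h ν q - kap f ν h ν₁ ε q * Ft f h q)) • (pu f q + rho f ν h ν₁ ε q • pu ν q) +
      (Lt f ν q - kap f ν h ν₁ ε q * Et f q) • (h q + rho f ν h ν₁ ε q • ν₁ q) = 0 := by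
    have b (a x y z w : R3) (s t r : ℝ) : dot3 a (s • (x + r • y) + t • (z + r • w)) =
        s * (dot3 a x + r * dot3 a y) + t * (dot3 a z + r * dot3 a w) := by
      simp [dot3]; ring
    have c (a b : R3) : dot3 a b = dot3 b a := by simp [dot3]; ring
    have eE : dot3 (pu f q) (pu f q) = Et f q := rfl
    have eF : dot3 (pu f q) (h q) = Ft f h q := rfl
    have eF' : dot3 (h q) (pu f q) = Ft f h q := c _ _
    have eG : dot3 (h q) (h q) = Gt h q := rfl
    have eL : dot3 (pu f q) (pu ν q) = - Lt f ν q := by simp [Lt]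
    have eM : dot3 (h q) (pu ν q) = - Mt h ν q := by simp [Mt]
    have eM' : dot3 (pu f q) (ν₁ q) = - Mt h ν q := by rw [← eM]; linarith
    have eN : dot3 (h q) (ν₁ q) = - Nt1 h ν₁ q := by simp [Nt1]
    refine aux_orth _ _ _ _ (H.indep q) ?_ ?_ ?_
    · rw [b, eE, eF, eL, eM']
      linear_combination (Lt f ν q * Ft f h q - Mt h ν q * Et f q) * (-hr)
    · rw [b, eF', eG, eM, eN]
      linear_combination (-rho f ν h ν₁ ε q) * hq +
        ((Mt h ν q - kap f ν h ν₁ ε q * Ft f h q) * Ft f h q -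
          (Lt f ν q - kap f ν h ν₁ ε q * Et f q) * Gt h q) * hr
    · rw [b, c _ (pu f q), c _ (h q), H.orth_fu_ν, hhν, hνuν, hνν₁]; ring
  have hν0 : ν q ≠ 0 := by
    intro h0
    have := H.unit_ν q
    simp [h0, dot3] at this
  unfold rankAt
  rw [hVD]
  refine aux_rank _ (V1c f ν h ν₁ ε q) (V2c f ν h ν₁ ε q) _ (ν q) 0 (pu f q) hA ?_ ?_ hν0
    (H.orth_fu_ν q)
  · have e : ((V1c f ν h ν₁ ε q, V2c f ν h ν₁ ε q) : ℝ × ℝ) =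
        V1c f ν h ν₁ ε q • ((1, 0) : ℝ × ℝ) + V2c f ν h ν₁ ε q • ((0, 1) : ℝ × ℝ) := by
      simp
    rw [e, map_add, map_smul, map_smul, hC, hC, hfv, hνv]
    change V1c f ν h ν₁ ε q • (pu f q + (rho f ν h ν₁ ε q • pu ν q + _)) + _ = _
    ext i
    have hwi := congrFun hw i
    simp [V1c, V2c] at hwi ⊢
    linear_combination q.2 * hwi
  · rw [hC]
    change dot3 (pu f q) (pu f q + (rho f ν h ν₁ ε q • pu ν q + _)) ≠ 0
    have e (a x y z : R3) (r s : ℝ) : dot3 a (x + (r • y + s • z)) =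
      dot3 a x + r * dot3 a y + s * dot3 a z := by simp [dot3]; ring
    have eL : dot3 (pu f q) (pu ν q) = - Lt f ν q := by simp [Lt]
    have eE : dot3 (pu f q) (pu f q) = Et f q := rfl
    rw [e, H.orth_fu_ν, eL, eE]
    intro h0
    apply mul_ne_zero hr0 hA
    linear_combination -h0 - Et f q * hr
end
end

section
/- Under the adapted pure-frontal setup with focal data, assume κ_t(0) ≠ 0. Then for j = 1,2, the origin 0 (a pure-frontal singular point of f) is also a singular point of the focal surface C_j (i.e. rank d(C_j)_0 ≤ 1) if and only if r_c(0) = 0. -/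
open Filter

noncomputable section

lemma dot3_parseval (a b n x y : R3) (haa : dot3 a a = 1) (hbb : dot3 b b = 1)
    (hnn : dot3 n n = 1) (hab : dot3 a b = 0) (han : dot3 a n = 0) (hbn : dot3 b n = 0) :
    dot3 x y = dot3 x a * dot3 a y + dot3 x b * dot3 b y + dot3 x n * dot3 n y := by
  have h1 : (!![a 0, a 1, a 2; b 0, b 1, b 2; n 0, n 1, n 2] : Matrix (Fin 3) (Fin 3) ℝ) *
      !![a 0, b 0, n 0; a 1, b 1, n 1; a 2, b 2, n 2] = 1 := by
    simp only [dot3] at *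
    ext i j
    fin_cases i <;> fin_cases j <;>
      simp [Matrix.mul_apply, Fin.sum_univ_three] <;> linarith
  have h2 := mul_eq_one_comm.mp h1
  have e := fun i j => congrFun (congrFun h2 i) j
  have e00 := e 0 0
  have e01 := e 0 1
  have e02 := e 0 2
  have e11 := e 1 1
  have e12 := e 1 2
  have e22 := e 2 2
  simp [Matrix.mul_apply, Fin.sum_univ_three] at e00 e01 e02 e11 e12 e22
  simp only [dot3]
  linear_combination (-x 0 * y 0) * e00 - (x 0 * y 1 + x 1 * y 0) * e01
    - (x 0 * y 2 + x 2 * y 0) * e02 - x 1 * y 1 * e11 - (x 1 * y 2 + x 2 * y 1) * e12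
    - x 2 * y 2 * e22

lemma diff_div {a b : ℝ × ℝ → ℝ} {p : ℝ × ℝ} (ha : DifferentiableAt ℝ a p)
    (hb : DifferentiableAt ℝ b p) (h0 : b p ≠ 0) : DifferentiableAt ℝ (fun q => a q / b q) p := by
  simp only [div_eq_mul_inv]
  exact ha.mul (hb.inv h0)

lemma diff_dot3 {a b : ℝ × ℝ → R3} {p : ℝ × ℝ} (ha : DifferentiableAt ℝ a p)
    (hb : DifferentiableAt ℝ b p) : DifferentiableAt ℝ (fun q => dot3 (a q) (b q)) p := by
  have ha' := differentiableAt_pi.1 ha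
  have hb' := differentiableAt_pi.1 hb
  unfold dot3
  exact (((ha' 0).mul (hb' 0)).add ((ha' 1).mul (hb' 1))).add ((ha' 2).mul (hb' 2))

lemma pv_mul' {a b : ℝ × ℝ → ℝ} {p : ℝ × ℝ} (ha : DifferentiableAt ℝ a p)
    (hb : DifferentiableAt ℝ b p) :
    pv (fun q => a q * b q) p = pv a p * b p + a p * pv b p := by
  unfold pv
  rw [fderiv_fun_mul ha hb]
  simp
  ring

lemma pv_sub' {a b : ℝ × ℝ → ℝ} {p : ℝ × ℝ} (ha : DifferentiableAt ℝ a p)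
    (hb : DifferentiableAt ℝ b p) :
    pv (fun q => a q - b q) p = pv a p - pv b p := by
  unfold pv
  rw [fderiv_fun_sub ha hb]
  simp

lemma pv_coord {a : ℝ × ℝ → R3} {p : ℝ × ℝ} (ha : DifferentiableAt ℝ a p) (i : Fin 3) :
    pv (fun q => a q i) p = pv a p i := by
  unfold pv
  have := (hasFDerivAt_pi'.1 ha.hasFDerivAt i).fderiv
  rw [this]
  rfl

lemma pv_dot3 {a b : ℝ × ℝ → R3} {p : ℝ × ℝ} (ha : DifferentiableAt ℝ a p)
    (hb : DifferentiableAt ℝ b p) :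
    pv (fun q => dot3 (a q) (b q)) p = dot3 (pv a p) (b p) + dot3 (a p) (pv b p) := by
  have ha' := differentiableAt_pi.1 ha
  have hb' := differentiableAt_pi.1 hb
  have e : ∀ i, pv (fun q => a q i * b q i) p = pv a p i * b p i + a p i * pv b p i := by
    intro i
    rw [pv_mul' (ha' i) (hb' i), pv_coord ha, pv_coord hb]
  have := e 0
  have := e 1
  have := e 2
  unfold dot3
  have : pv (fun q => a q 0 * b q 0 + a q 1 * b q 1 + a q 2 * b q 2) p =
      pv (fun q => a q 0 * b q 0) p + pv (fun q => a q 1 * b q 1) p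
        + pv (fun q => a q 2 * b q 2) p := by
    unfold pv
    rw [fderiv_fun_add (((ha' 0).fun_mul (hb' 0)).fun_add ((ha' 1).fun_mul (hb' 1)))
        ((ha' 2).fun_mul (hb' 2)),
      fderiv_fun_add ((ha' 0).fun_mul (hb' 0)) ((ha' 1).fun_mul (hb' 1))]
    simp
  rw [this, e, e, e]
  ring

lemma diff_pu {F : ℝ × ℝ → R3} (hF : ContDiff ℝ (⊤ : ℕ∞) F) (p : ℝ × ℝ) :
    DifferentiableAt ℝ (pu F) p := by
  have h1 : ContDiff ℝ 1 (fderiv ℝ F) := hF.fderiv_right (by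
    have h2 : (((2 : ℕ∞)) : WithTop ℕ∞) ≤ ((⊤ : ℕ∞) : WithTop ℕ∞) := WithTop.coe_le_coe.2 le_top
    have h3 : (1 + 1 : WithTop ℕ∞) = ((2 : ℕ∞) : WithTop ℕ∞) := by norm_num
    rw [h3]; exact h2)
  exact ((h1.differentiable (by norm_num)) p).clm_apply (differentiableAt_const _)

lemma pv_pu_zero {F g : ℝ × ℝ → R3} (hF : ContDiff ℝ (⊤ : ℕ∞) F) (hg : ContDiff ℝ (⊤ : ℕ∞) g)
    (h : ∀ p : ℝ × ℝ, pv F p = p.2 • g p) : pv (pu F) 0 = 0 := by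
  have h1 : ContDiff ℝ 1 (fderiv ℝ F) := hF.fderiv_right (by
    have h2 : (((2 : ℕ∞)) : WithTop ℕ∞) ≤ ((⊤ : ℕ∞) : WithTop ℕ∞) := WithTop.coe_le_coe.2 le_top
    have h3 : (1 + 1 : WithTop ℕ∞) = ((2 : ℕ∞) : WithTop ℕ∞) := by norm_num
    rw [h3]; exact h2)
  have hd : DifferentiableAt ℝ (fderiv ℝ F) 0 := (h1.differentiable (by norm_num)) 0
  have hs := second_derivative_symmetric (f := F) (x := (0 : ℝ × ℝ))
    (fun y => (hF.differentiable (by simp) y).hasFDerivAt) hd.hasFDerivAt (0, 1) (1, 0)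
  have e1 : pv (pu F) 0 = fderiv ℝ (fderiv ℝ F) 0 (0, 1) (1, 0) := by
    unfold pv pu
    rw [fderiv_clm_apply hd (differentiableAt_const _)]
    simp
  have e2 : pu (pv F) 0 = fderiv ℝ (fderiv ℝ F) 0 (1, 0) (0, 1) := by
    unfold pv pu
    rw [fderiv_clm_apply hd (differentiableAt_const _)]
    simp
  rw [e1, hs, ← e2, show pv F = fun p => p.2 • g p from funext h]
  unfold pu
  rw [fderiv_fun_smul differentiableAt_snd (hg.differentiable (by simp) 0)]
  simp [fderiv_snd]

/-- assuming κ_t(0) ≠ 0, the origin is a singular point of the focal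
surface C_j iff r_c(0) = 0. -/
theorem stmt_11 (f ν h ν₁ : ℝ × ℝ → R3) (H : AdaptedPureFrontal f ν h ν₁)
    (ε : ℝ) (hε : ε = 1 ∨ ε = -1)
    (hHK : ∀ p : ℝ × ℝ, Hm f ν h ν₁ p ^ 2 - Kg f ν h ν₁ p > 0)
    (hκ : ∀ p : ℝ × ℝ, kap f ν h ν₁ ε p ≠ 0)
    (hkt : kt h ν 0 ≠ 0) :
    rankAt (Cf f ν h ν₁ ε) 0 ≤ 1 ↔ rc f ν h ν₁ 0 = 0 := by
  classical
  have df : DifferentiableAt ℝ f 0 := H.smooth_f.differentiable (by simp) 0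
  have dν : DifferentiableAt ℝ ν 0 := H.smooth_ν.differentiable (by simp) 0
  have dh : DifferentiableAt ℝ h 0 := H.smooth_h.differentiable (by simp) 0
  have dν₁ : DifferentiableAt ℝ ν₁ 0 := H.smooth_ν₁.differentiable (by simp) 0
  have dfu := diff_pu H.smooth_f 0
  have dνu := diff_pu H.smooth_ν 0
  have fuv : pv (pu f) 0 = 0 := pv_pu_zero H.smooth_f H.smooth_h H.fv_eq
  have νuv : pv (pu ν) 0 = 0 := pv_pu_zero H.smooth_ν H.smooth_ν₁ H.νv_eq
  have fv0 : pv f 0 = 0 := by rw [H.fv_eq]; simp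
  have νv0 : pv ν 0 = 0 := by rw [H.νv_eq]; simp
  have z : ((0 : ℝ), (0 : ℝ)) = 0 := rfl
  have haa := H.adapted_fu 0
  have hbb := H.adapted_h 0
  have hab := H.adapted_fu_h 0
  have hbn := H.adapted_h_ν 0
  rw [z] at haa hbb hab hbn
  have hnn := H.unit_ν 0
  have han := H.orth_fu_ν 0
  have hM : Mt h ν 0 ≠ 0 := hkt
  have sm0 : ∀ (c : ℝ) (x y : R3), dot3 (c • x) y = c * dot3 x y := by
    intro c x y; simp [dot3]; ring
  have z0 : ∀ x : R3, dot3 0 x = 0 := by intro x; simp [dot3]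
  have z1 : ∀ x : R3, dot3 x 0 = 0 := by intro x; simp [dot3]
  have comm : ∀ x y : R3, dot3 x y = dot3 y x := by intro x y; simp [dot3]; ring
  have hhν : (fun p => dot3 (h p) (ν p)) = fun _ => 0 := by
    funext p
    obtain ⟨u, v⟩ := p
    by_cases hv : v = 0
    · subst hv; exact H.adapted_h_ν u
    · have := H.orth_fv_ν (u, v)
      rw [H.fv_eq, sm0] at this
      exact (mul_eq_zero.1 this).resolve_left hv
  have hvn : dot3 (pv h 0) (ν 0) = 0 := by
    have e := pv_dot3 dh dν
    rw [hhν, νv0, z1] at e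
    simp [pv] at e
    simpa [pv] using e.symm
  -- differentiability
  have dE : DifferentiableAt ℝ (Et f) 0 := diff_dot3 dfu dfu
  have dF : DifferentiableAt ℝ (Ft f h) 0 := diff_dot3 dfu dh
  have dG : DifferentiableAt ℝ (Gt h) 0 := diff_dot3 dh dh
  have dL : DifferentiableAt ℝ (Lt f ν) 0 := (diff_dot3 dfu dνu).neg
  have dM : DifferentiableAt ℝ (Mt h ν) 0 := (diff_dot3 dh dνu).neg
  have dN : DifferentiableAt ℝ (Nt1 h ν₁) 0 := (diff_dot3 dh dν₁).neg
  have dD : DifferentiableAt ℝ (fun p => Et f p * Gt h p - Ft f h p ^ 2) 0 :=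
    (dE.mul dG).sub (dF.pow 2)
  have E0 : Et f 0 = 1 := haa
  have G0 : Gt h 0 = 1 := hbb
  have F0 : Ft f h 0 = 0 := hab
  have D0 : Et f 0 * Gt h 0 - Ft f h 0 ^ 2 ≠ 0 := by rw [E0, G0, F0]; norm_num
  have dK : DifferentiableAt ℝ (Kg f ν h ν₁) 0 :=
    diff_div (b := fun p => Et f p * Gt h p - Ft f h p ^ 2)
      ((dL.fun_mul dN).fun_sub (dM.fun_pow 2)) dD D0
  have dH : DifferentiableAt ℝ (Hm f ν h ν₁) 0 :=
    diff_div (b := fun p => 2 * (Et f p * Gt h p - Ft f h p ^ 2))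
      (((dE.fun_mul dN).fun_sub ((dF.const_mul 2).fun_mul dM)).fun_add (dG.fun_mul dL))
      (dD.const_mul 2) (mul_ne_zero two_ne_zero D0)
  have dκ : DifferentiableAt ℝ (kap f ν h ν₁ ε) 0 :=
    dH.add ((((dH.pow 2).sub dK).sqrt (hHK 0).ne').const_mul ε)
  have dρ : DifferentiableAt ℝ (rho f ν h ν₁ ε) 0 := dκ.inv (hκ 0)
  -- characteristic equation
  have ε2 : ε ^ 2 = 1 := by rcases hε with rfl | rfl <;> norm_num
  have quad : ∀ p, kap f ν h ν₁ ε p ^ 2 - 2 * Hm f ν h ν₁ p * kap f ν h ν₁ ε p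
      + Kg f ν h ν₁ p = 0 := by
    intro p
    have := Real.sq_sqrt (hHK p).le
    unfold kap
    linear_combination (Real.sqrt (Hm f ν h ν₁ p ^ 2 - Kg f ν h ν₁ p)) ^ 2 * ε2 + this
  have char : ∀ p, Et f p * Gt h p - Ft f h p ^ 2 ≠ 0 →
      (Lt f ν p - kap f ν h ν₁ ε p * Et f p) * (Nt1 h ν₁ p - kap f ν h ν₁ ε p * Gt h p)
      - (Mt h ν p - kap f ν h ν₁ ε p * Ft f h p) * (Mt h ν p - kap f ν h ν₁ ε p * Ft f h p) = 0 := by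
    intro p hp
    have q := quad p
    have eH : Hm f ν h ν₁ p * (2 * (Et f p * Gt h p - Ft f h p ^ 2)) =
      Et f p * Nt1 h ν₁ p - 2 * Ft f h p * Mt h ν p + Gt h p * Lt f ν p :=
      div_mul_cancel₀ _ (mul_ne_zero two_ne_zero hp)
    have eK : Kg f ν h ν₁ p * (Et f p * Gt h p - Ft f h p ^ 2) =
      Lt f ν p * Nt1 h ν₁ p - Mt h ν p ^ 2 := div_mul_cancel₀ _ hp
    linear_combination (Et f p * Gt h p - Ft f h p ^ 2) * q + kap f ν h ν₁ ε p * eH - eK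
  have dchar := (dD.continuousAt.eventually_ne D0).mono char
  have pvz : pv (fun p => (Lt f ν p - kap f ν h ν₁ ε p * Et f p) *
      (Nt1 h ν₁ p - kap f ν h ν₁ ε p * Gt h p)
      - (Mt h ν p - kap f ν h ν₁ ε p * Ft f h p) *
        (Mt h ν p - kap f ν h ν₁ ε p * Ft f h p)) 0 = 0 := by
    have := Filter.EventuallyEq.fderiv_eq (𝕜 := ℝ) (f := fun _ => (0 : ℝ)) dchar
    unfold pv
    rw [this]
    simp
  have d1 := dL.fun_sub (dκ.fun_mul dE)
  have d2 := dN.fun_sub (dκ.fun_mul dG)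
  have d3 := dM.fun_sub (dκ.fun_mul dF)
  rw [pv_sub' (d1.fun_mul d2) (d3.fun_mul d3), pv_mul' d1 d2, pv_mul' d3 d3,
    pv_sub' dL (dκ.fun_mul dE), pv_sub' dN (dκ.fun_mul dG), pv_sub' dM (dκ.fun_mul dF),
    pv_mul' dκ dE, pv_mul' dκ dF, pv_mul' dκ dG, E0, F0, G0] at pvz
  have pvneg : ∀ a : ℝ × ℝ → ℝ, pv (fun p => - a p) 0 = - pv a 0 := by
    intro a; unfold pv; rw [fderiv_fun_neg]; rfl
  have Ev : pv (Et f) 0 = 0 := by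
    have := pv_dot3 dfu dfu
    rw [fuv, z0, z1, add_zero] at this; exact this
  have Lv : pv (Lt f ν) 0 = 0 := by
    have := pv_dot3 dfu dνu
    rw [fuv, νuv, z0, z1, add_zero] at this
    have e := pvneg (fun q => dot3 (pu f q) (pu ν q))
    rw [this, neg_zero] at e; exact e
  have Fv : pv (Ft f h) 0 = dot3 (pu f 0) (pv h 0) := by
    have := pv_dot3 dfu dh
    rw [fuv, z0, zero_add] at this; exact this
  have Gv : pv (Gt h) 0 = 2 * dot3 (pv h 0) (h 0) := by
    have := pv_dot3 dh dh
    rw [comm (h 0), ← two_mul] at this; exact this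
  have Mv : pv (Mt h ν) 0 = Lt f ν 0 * pv (Ft f h) 0 + Mt h ν 0 * pv (Gt h) 0 / 2 := by
    have := pv_dot3 dh dνu
    rw [νuv, z1, add_zero] at this
    have e := pvneg (fun q => dot3 (h q) (pu ν q))
    rw [this, dot3_parseval _ _ _ _ (pu ν 0) haa hbb hnn hab han hbn, hvn] at e
    rw [Fv, Gv, comm (pu f 0)]
    have e' : pv (Mt h ν) 0 = _ := e
    rw [e']
    unfold Lt Mt
    ring
  have c0 := char 0 D0
  rw [E0, F0, G0] at c0
  have hLκ : Lt f ν 0 - kap f ν h ν₁ ε 0 ≠ 0 := by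
    intro h0
    apply hM
    have : Mt h ν 0 * Mt h ν 0 = 0 := by
      linear_combination (Nt1 h ν₁ 0 - kap f ν h ν₁ ε 0) * h0 - c0
    simpa using this
  have hHκ : Lt f ν 0 + Nt1 h ν₁ 0 - 2 * kap f ν h ν₁ ε 0 ≠ 0 := by
    have eH : 2 * Hm f ν h ν₁ 0 = Lt f ν 0 + Nt1 h ν₁ 0 := by
      unfold Hm; rw [E0, F0, G0]; ring
    rw [← eH]
    unfold kap
    have hs := (Real.sqrt_pos.2 (hHK 0)).ne'
    have hε0 : ε ≠ 0 := by rcases hε with rfl | rfl <;> norm_num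
    intro h0
    apply mul_ne_zero hε0 hs
    linarith
  have key : pv (kap f ν h ν₁ ε) 0 * (Lt f ν 0 + Nt1 h ν₁ 0 - 2 * kap f ν h ν₁ ε 0) =
      (Lt f ν 0 - kap f ν h ν₁ ε 0) * (rc f ν h ν₁ 0 / 24) := by
    rw [Ev, Lv, Mv] at pvz
    unfold rc
    rw [z]
    linear_combination -pvz + pv (Gt h) 0 * c0
  have hrc : pv (kap f ν h ν₁ ε) 0 = 0 ↔ rc f ν h ν₁ 0 = 0 := by
    constructor
    · intro h0
      rw [h0, zero_mul] at key
      have := (mul_eq_zero.1 key.symm).resolve_left hLκ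
      linarith
    · intro h0
      rw [h0, zero_div, mul_zero] at key
      exact (mul_eq_zero.1 key).resolve_right hHκ
  have ρv : pv (rho f ν h ν₁ ε) 0 = 0 ↔ pv (kap f ν h ν₁ ε) 0 = 0 := by
    have hm : pv (fun q => rho f ν h ν₁ ε q * kap f ν h ν₁ ε q) 0 = 0 := by
      have : (fun q => rho f ν h ν₁ ε q * kap f ν h ν₁ ε q) = fun _ => 1 := by
        funext q; exact inv_mul_cancel₀ (hκ q)
      rw [this]; simp [pv]
    rw [pv_mul' dρ dκ] at hm
    have hr : rho f ν h ν₁ ε 0 ≠ 0 := inv_ne_zero (hκ 0)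
    constructor
    · intro h0
      rw [h0, zero_mul, zero_add] at hm
      exact (mul_eq_zero.1 hm).resolve_left hr
    · intro h0
      rw [h0, mul_zero, add_zero] at hm
      exact (mul_eq_zero.1 hm).resolve_right (hκ 0)
  rw [← hrc, ← ρv]
  have hr : rho f ν h ν₁ ε 0 ≠ 0 := inv_ne_zero (hκ 0)
  have fC : ∀ w, fderiv ℝ (Cf f ν h ν₁ ε) 0 w = fderiv ℝ f 0 w +
      (rho f ν h ν₁ ε 0 • fderiv ℝ ν 0 w + fderiv ℝ (rho f ν h ν₁ ε) 0 w • ν 0) := by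
    intro w
    have : Cf f ν h ν₁ ε = fun p => f p + rho f ν h ν₁ ε p • ν p := rfl
    rw [this, fderiv_fun_add df (dρ.fun_smul dν), fderiv_fun_smul dρ dν]
    simp
  have Cv : fderiv ℝ (Cf f ν h ν₁ ε) 0 (0, 1) = pv (rho f ν h ν₁ ε) 0 • ν 0 := by
    have e := fC (0, 1)
    change _ = pv f 0 + (_ • pv ν 0 + pv (rho f ν h ν₁ ε) 0 • _) at e
    rw [fv0, νv0, smul_zero, zero_add, zero_add] at e
    exact e
  have Cu : dot3 (fderiv ℝ (Cf f ν h ν₁ ε) 0 (1, 0)) (h 0) = - rho f ν h ν₁ ε 0 * Mt h ν 0 := by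
    have e := fC (1, 0)
    change _ = pu f 0 + (_ • pu ν 0 + pu (rho f ν h ν₁ ε) 0 • _) at e
    have ad : ∀ x y w : R3, dot3 (x + y) w = dot3 x w + dot3 y w := by
      intro x y w; simp [dot3]; ring
    rw [e, ad, ad, sm0, sm0, hab, comm (ν 0), hbn, comm (pu ν 0)]
    unfold Mt
    ring
  unfold rankAt
  constructor
  · intro hle
    obtain ⟨w, hw⟩ := finrank_le_one_iff.1 hle
    obtain ⟨a, ha⟩ := hw ⟨fderiv ℝ (Cf f ν h ν₁ ε) 0 (1, 0), ⟨(1, 0), rfl⟩⟩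
    obtain ⟨b, hb⟩ := hw ⟨fderiv ℝ (Cf f ν h ν₁ ε) 0 (0, 1), ⟨(0, 1), rfl⟩⟩
    have ha' : a • (w : R3) = fderiv ℝ (Cf f ν h ν₁ ε) 0 (1, 0) := congrArg Subtype.val ha
    have hb' : b • (w : R3) = fderiv ℝ (Cf f ν h ν₁ ε) 0 (0, 1) := congrArg Subtype.val hb
    rw [← ha', sm0] at Cu
    rw [Cv] at hb'
    have q1 := congrArg (fun x => dot3 x (h 0)) hb'
    have q2 := congrArg (fun x => dot3 x (ν 0)) hb'
    simp only [sm0] at q1 q2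
    rw [comm (ν 0), hbn, mul_zero] at q1
    rw [hnn, mul_one] at q2
    have hwh : dot3 (w : R3) (h 0) ≠ 0 := by
      intro h0
      rw [h0, mul_zero] at Cu
      exact mul_ne_zero (neg_ne_zero.2 hr) hM Cu.symm
    rw [← q2, (mul_eq_zero.1 q1).resolve_right hwh, zero_mul]
  · intro h0
    rw [h0, zero_smul] at Cv
    refine finrank_le_one (⟨fderiv ℝ (Cf f ν h ν₁ ε) 0 (1, 0), ⟨(1, 0), rfl⟩⟩ :
      LinearMap.range (fderiv ℝ (Cf f ν h ν₁ ε) 0).toLinearMap) ?_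
    rintro ⟨_, ⟨⟨x, y⟩, rfl⟩⟩
    refine ⟨x, Subtype.ext ?_⟩
    change x • fderiv ℝ (Cf f ν h ν₁ ε) 0 (1, 0) = fderiv ℝ (Cf f ν h ν₁ ε) 0 (x, y)
    have : ((x, y) : ℝ × ℝ) = x • (1, 0) + y • (0, 1) := by simp
    rw [this, map_add, map_smul, map_smul, Cv, smul_zero, add_zero]
end
end

section
/- Under the adapted pure-frontal setup with focal data, assume κ_t(0) ≠ 0 and r_c(0) = 0. Then for j = 1,2: rank d(C_j)_0 = 1, and at every point the derivative of C_j in the direction of the principal vector field V_j satisfies d(C_j)(V_j) = (V_jρ_j)·ν; in particular V_j is a null vector field of C_j along the singular set {V_jρ_j = 0} of C_j. -/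
open Filter

noncomputable section

lemma aux_det {a b c : R3} (hl : LinearIndependent ℝ ![a, b, c]) :
    a 0 * (b 1 * c 2 - b 2 * c 1) - a 1 * (b 0 * c 2 - b 2 * c 0)
      + a 2 * (b 0 * c 1 - b 1 * c 0) ≠ 0 := by
  have h1 : IsUnit (Matrix.of ![a, b, c]) :=
    Matrix.linearIndependent_rows_iff_isUnit.mp hl
  rw [Matrix.isUnit_iff_isUnit_det, Matrix.det_fin_three, isUnit_iff_ne_zero] at h1
  intro h0
  apply h1
  simp
  linear_combination h0

lemma aux_zero {a b c w : R3} (hl : LinearIndependent ℝ ![a, b, c])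
    (ha : dot3 a w = 0) (hb : dot3 b w = 0) (hc : dot3 c w = 0) : w = 0 := by
  have hd := aux_det hl
  unfold dot3 at ha hb hc
  funext i
  fin_cases i
  · refine (mul_eq_zero.mp ?_).resolve_left hd
    show _ * w 0 = 0
    linear_combination (b 1 * c 2 - b 2 * c 1) * ha - (a 1 * c 2 - a 2 * c 1) * hb
      + (a 1 * b 2 - a 2 * b 1) * hc
  · refine (mul_eq_zero.mp ?_).resolve_left hd
    show _ * w 1 = 0
    linear_combination -(b 0 * c 2 - b 2 * c 0) * ha + (a 0 * c 2 - a 2 * c 0) * hb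
      - (a 0 * b 2 - a 2 * b 0) * hc
  · refine (mul_eq_zero.mp ?_).resolve_left hd
    show _ * w 2 = 0
    linear_combination (b 0 * c 1 - b 1 * c 0) * ha - (a 0 * c 1 - a 1 * c 0) * hb
      + (a 0 * b 1 - a 1 * b 0) * hc

lemma aux_gram {a b c : R3} (hl : LinearIndependent ℝ ![a, b, c])
    (hac : dot3 a c = 0) (hbc : dot3 b c = 0) (hc : dot3 c c = 1) :
    dot3 a a * dot3 b b - dot3 a b ^ 2 ≠ 0 := by
  have hd := aux_det hl
  intro h0
  apply hd
  have : (a 0 * (b 1 * c 2 - b 2 * c 1) - a 1 * (b 0 * c 2 - b 2 * c 0)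
      + a 2 * (b 0 * c 1 - b 1 * c 0)) ^ 2 =
      dot3 c c * (dot3 a a * dot3 b b - dot3 a b ^ 2) + 2 * dot3 a b * dot3 b c * dot3 a c
        - dot3 a a * dot3 b c ^ 2 - dot3 b b * dot3 a c ^ 2 := by
    unfold dot3; ring
  rw [h0, hac, hbc] at this
  have h2 := this.trans (by ring : _ = (0:ℝ))
  exact pow_eq_zero_iff (two_ne_zero) |>.mp h2

/-- expansion of the product of two vectors in a frame, third vector orthogonal. -/
lemma aux_exp {a b c x y : R3} (haa : dot3 a a = 1) (hbb : dot3 b b = 1) 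
    (hl : LinearIndependent ℝ ![a, b, c])
    (hab : dot3 a b = 0) (hac : dot3 a c = 0) (hbc : dot3 b c = 0) (hy : dot3 c y = 0) :
    dot3 x y = dot3 a x * dot3 a y + dot3 b x * dot3 b y := by
  have : y - (dot3 a y • a + dot3 b y • b) = 0 := by
    apply aux_zero hl
    · have : dot3 a (y - (dot3 a y • a + dot3 b y • b)) =
        dot3 a y - dot3 a y * dot3 a a - dot3 b y * dot3 a b := by simp [dot3]; ring
      rw [this, haa, hab]; ring
    · have : dot3 b (y - (dot3 a y • a + dot3 b y • b)) =
        dot3 b y - dot3 a y * dot3 a b - dot3 b y * dot3 b b := by simp [dot3]; ring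
      rw [this, hbb, hab]; ring
    · have : dot3 c (y - (dot3 a y • a + dot3 b y • b)) =
        dot3 c y - dot3 a y * dot3 a c - dot3 b y * dot3 b c := by simp [dot3]; ring
      rw [this, hac, hbc, hy]; ring
  have h2 := sub_eq_zero.mp this
  have h3 : dot3 x y = dot3 x (dot3 a y • a + dot3 b y • b) := by rw [← h2]
  rw [h3]
  have : dot3 x (dot3 a y • a + dot3 b y • b) = dot3 a y * dot3 a x + dot3 b y * dot3 b x := by
    simp [dot3]; ring
  rw [this]; ring

lemma aux_diff_dot {a b : ℝ × ℝ → R3} (ha : Differentiable ℝ a) (hb : Differentiable ℝ b) :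
    Differentiable ℝ (fun p => dot3 (a p) (b p)) := by
  unfold dot3
  have h1 : ∀ i, Differentiable ℝ (fun p => a p i) := fun i => differentiable_pi.mp ha i
  have h2 : ∀ i, Differentiable ℝ (fun p => b p i) := fun i => differentiable_pi.mp hb i
  exact (((h1 0).mul (h2 0)).add ((h1 1).mul (h2 1))).add ((h1 2).mul (h2 2))

lemma aux_fderiv_dot_s12 {a b : ℝ × ℝ → R3} (ha : Differentiable ℝ a) (hb : Differentiable ℝ b)
    (p w : ℝ × ℝ) : fderiv ℝ (fun p => dot3 (a p) (b p)) p w =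
      dot3 (fderiv ℝ a p w) (b p) + dot3 (a p) (fderiv ℝ b p w) := by
  have h1 : ∀ i, HasFDerivAt (fun p => a p i)
      ((ContinuousLinearMap.proj (R := ℝ) (φ := fun _ : Fin 3 => ℝ) i).comp (fderiv ℝ a p)) p :=
    fun i => hasFDerivAt_pi'.mp (ha p).hasFDerivAt i
  have h2 : ∀ i, HasFDerivAt (fun p => b p i)
      ((ContinuousLinearMap.proj (R := ℝ) (φ := fun _ : Fin 3 => ℝ) i).comp (fderiv ℝ b p)) p :=
    fun i => hasFDerivAt_pi'.mp (hb p).hasFDerivAt i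
  have h3 := (((h1 0).mul (h2 0)).add ((h1 1).mul (h2 1))).add ((h1 2).mul (h2 2))
  have h4 : HasFDerivAt (fun p => dot3 (a p) (b p)) _ p := h3
  rw [h4.fderiv]
  simp [dot3]
  ring

lemma aux_pu_diff {a : ℝ × ℝ → R3} (ha : ContDiff ℝ (⊤ : ℕ∞) a) :
    Differentiable ℝ (pu a) := by
  have h1 : ContDiff ℝ 1 (fderiv ℝ a) := ha.fderiv_right (by norm_cast)
  have h2 := h1.differentiable (by norm_num)
  unfold pu
  exact fun p => (h2 p).clm_apply (differentiableAt_const _)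

lemma aux_diff {a : ℝ × ℝ → R3} (ha : ContDiff ℝ (⊤ : ℕ∞) a) : Differentiable ℝ a :=
  ha.differentiable (by simp)

lemma aux_symm_s12 {a b : ℝ × ℝ → R3} (ha : ContDiff ℝ (⊤ : ℕ∞) a) (hb : Differentiable ℝ b)
    (hab : ∀ p : ℝ × ℝ, pv a p = p.2 • b p) (p : ℝ × ℝ) :
    fderiv ℝ (pu a) p (0, 1) = p.2 • pu b p := by
  have h1 : ContDiff ℝ 1 (fderiv ℝ a) := ha.fderiv_right (by norm_cast)
  have h2 := (h1.differentiable (by norm_num)) p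
  have hs : IsSymmSndFDerivAt ℝ a p :=
    (ha.contDiffAt).isSymmSndFDerivAt (by simp; norm_cast)
  have e1 : fderiv ℝ (pu a) p (0, 1) = fderiv ℝ (fderiv ℝ a) p (0, 1) (1, 0) := by
    unfold pu
    rw [fderiv_clm_apply h2 (differentiableAt_const _)]
    simp
  have e2 : fderiv ℝ (pv a) p (1, 0) = fderiv ℝ (fderiv ℝ a) p (1, 0) (0, 1) := by
    unfold pv
    rw [fderiv_clm_apply h2 (differentiableAt_const _)]
    simp
  rw [e1, hs.eq, ← e2]
  have : pv a = fun p => p.2 • b p := funext hab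
  rw [this]
  have h5 : HasFDerivAt (fun p : ℝ × ℝ => p.2 • b p) _ p :=
    (hasFDerivAt_snd (𝕜 := ℝ) (p := p)).smul (hb p).hasFDerivAt
  rw [h5.fderiv]
  simp [pu]

lemma aux_dense {g : ℝ × ℝ → ℝ} (hg : Continuous g) (h : ∀ p : ℝ × ℝ, p.2 * g p = 0)
    (p : ℝ × ℝ) : g p = 0 := by
  have hc : Continuous (fun t : ℝ => g (p.1, t)) := by fun_prop
  have := Continuous.ext_on (dense_compl_singleton (0:ℝ)) hc (continuous_const (y := (0:ℝ)))
    (fun t ht => (mul_eq_zero.mp (h (p.1, t))).resolve_left ht)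
  exact congrFun this p.2

lemma aux_line {X : ℝ × ℝ → ℝ} (hX : Differentiable ℝ X) :
    HasDerivAt (fun t : ℝ => X (0, t)) (pv X (0, 0)) 0 := by
  have h1 : HasDerivAt (fun t : ℝ => ((0:ℝ), t)) ((0:ℝ), (1:ℝ)) 0 :=
    (hasDerivAt_const (0:ℝ) (0:ℝ)).prodMk (hasDerivAt_id 0)
  exact (hX (0, 0)).hasFDerivAt.comp_hasDerivAt (0:ℝ) h1

lemma aux_dot_comm (a b : R3) : dot3 a b = dot3 b a := by unfold dot3; ring

/-- if κ_t(0) ≠ 0 and r_c(0) = 0, then rank d(C_j)_0 = 1,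
d(C_j)(V_j) = (V_jρ_j)·ν everywhere, and in particular V_j is a null vector field of
C_j along the singular set {V_jρ_j = 0}. -/
theorem stmt_12 (f ν h ν₁ : ℝ × ℝ → R3) (H : AdaptedPureFrontal f ν h ν₁)
    (ε : ℝ) (hε : ε = 1 ∨ ε = -1)
    (hHK : ∀ p : ℝ × ℝ, Hm f ν h ν₁ p ^ 2 - Kg f ν h ν₁ p > 0)
    (hκ : ∀ p : ℝ × ℝ, kap f ν h ν₁ ε p ≠ 0)
    (hkt : kt h ν 0 ≠ 0) (hrc : rc f ν h ν₁ 0 = 0) :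
    rankAt (Cf f ν h ν₁ ε) 0 = 1 ∧
    (∀ p : ℝ × ℝ,
      VD f ν h ν₁ ε (Cf f ν h ν₁ ε) p = VD f ν h ν₁ ε (rho f ν h ν₁ ε) p • ν p) ∧
    (∀ p : ℝ × ℝ,
      VD f ν h ν₁ ε (rho f ν h ν₁ ε) p = 0 → VD f ν h ν₁ ε (Cf f ν h ν₁ ε) p = 0) := by
  have df := aux_diff H.smooth_f
  have dn := aux_diff H.smooth_ν
  have dh := aux_diff H.smooth_h
  have dn1 := aux_diff H.smooth_ν₁
  have dfu := aux_pu_diff H.smooth_f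
  have dnu := aux_pu_diff H.smooth_ν
  -- orthogonality relations
  have hhn : ∀ p, dot3 (h p) (ν p) = 0 := by
    apply aux_dense (aux_diff_dot dh dn).continuous
    intro p
    have := H.orth_fv_ν p
    rw [H.fv_eq] at this
    rw [← this]; simp [dot3]; ring
  have hnw : ∀ p w, dot3 (ν p) (fderiv ℝ ν p w) = 0 := by
    intro p w
    have h1 := aux_fderiv_dot_s12 dn dn p w
    rw [show (fun p => dot3 (ν p) (ν p)) = fun _ => (1:ℝ) from funext H.unit_ν] at h1
    rw [aux_dot_comm (fderiv ℝ ν p w)] at h1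
    simp at h1
    linarith
  have hnnu : ∀ p, dot3 (ν p) (pu ν p) = 0 := fun p => hnw p _
  have hnn1 : ∀ p, dot3 (ν p) (ν₁ p) = 0 := by
    apply aux_dense (aux_diff_dot dn dn1).continuous
    intro p
    have := hnw p (0, 1)
    rw [show fderiv ℝ ν p (0, 1) = p.2 • ν₁ p from H.νv_eq p] at this
    rw [← this]; simp [dot3]; ring
  have hsym : ∀ p, dot3 (pu f p) (ν₁ p) - dot3 (h p) (pu ν p) = 0 := by
    apply aux_dense ((aux_diff_dot dfu dn1).sub (aux_diff_dot dh dnu)).continuous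
    intro p
    have h1 := aux_fderiv_dot_s12 dfu dn p (0, 1)
    rw [show (fun p => dot3 (pu f p) (ν p)) = fun _ => (0:ℝ) from funext H.orth_fu_ν,
      aux_symm_s12 H.smooth_f dh H.fv_eq,
      show fderiv ℝ ν p (0, 1) = p.2 • ν₁ p from H.νv_eq p] at h1
    have h2 := aux_fderiv_dot_s12 dh dn p (1, 0)
    rw [show (fun p => dot3 (h p) (ν p)) = fun _ => (0:ℝ) from funext hhn] at h2
    change _ = dot3 (pu h p) (ν p) + dot3 (h p) (pu ν p) at h2
    simp at h1 h2
    simp only [dot3, Pi.smul_apply, smul_eq_mul] at h1 h2 ⊢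
    simp only [Pi.sub_apply]
    linear_combination p.2 * h2 - h1
  -- nondegenerate
  have hD : ∀ p, Et f p * Gt h p - Ft f h p ^ 2 ≠ 0 := fun p =>
    aux_gram (H.indep p) (H.orth_fu_ν p) (hhn p) (H.unit_ν p)
  have dE : Differentiable ℝ (Et f) := aux_diff_dot dfu dfu
  have dF : Differentiable ℝ (Ft f h) := aux_diff_dot dfu dh
  have dG : Differentiable ℝ (Gt h) := aux_diff_dot dh dh
  have dL : Differentiable ℝ (Lt f ν) := (aux_diff_dot dfu dnu).neg
  have dM : Differentiable ℝ (Mt h ν) := (aux_diff_dot dh dnu).neg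
  have dN : Differentiable ℝ (Nt1 h ν₁) := (aux_diff_dot dh dn1).neg
  have dH : Differentiable ℝ (Hm f ν h ν₁) := by
    unfold Hm
    intro p
    simp only [div_eq_mul_inv]
    refine DifferentiableAt.fun_mul ?_ (DifferentiableAt.fun_inv ?_ ?_)
    · fun_prop
    · fun_prop
    · exact mul_ne_zero two_ne_zero (hD p)
  have dK : Differentiable ℝ (Kg f ν h ν₁) := by
    unfold Kg
    intro p
    simp only [div_eq_mul_inv]
    refine DifferentiableAt.fun_mul ?_ (DifferentiableAt.fun_inv ?_ ?_)
    · fun_prop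
    · fun_prop
    · exact hD p
  have dk : Differentiable ℝ (kap f ν h ν₁ ε) := by
    unfold kap
    intro p
    have : DifferentiableAt ℝ (fun p => Hm f ν h ν₁ p ^ 2 - Kg f ν h ν₁ p) p := by fun_prop
    exact (dH p).add ((this.sqrt (hHK p).ne').const_mul ε)
  have dr : Differentiable ℝ (rho f ν h ν₁ ε) := fun p => (dk p).inv (hκ p)
  have hε2 : ε ^ 2 = 1 := by rcases hε with h | h <;> rw [h] <;> norm_num
  have hchar : ∀ p, (Et f p * Gt h p - Ft f h p ^ 2) * kap f ν h ν₁ ε p ^ 2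
      - (Et f p * Nt1 h ν₁ p - 2 * Ft f h p * Mt h ν p + Gt h p * Lt f ν p) * kap f ν h ν₁ ε p
      + (Lt f ν p * Nt1 h ν₁ p - Mt h ν p ^ 2) = 0 := by
    intro p
    have hs := Real.sq_sqrt (hHK p).le
    have e1 : (Et f p * Nt1 h ν₁ p - 2 * Ft f h p * Mt h ν p + Gt h p * Lt f ν p) =
        Hm f ν h ν₁ p * (2 * (Et f p * Gt h p - Ft f h p ^ 2)) := by
      unfold Hm
      rw [div_mul_cancel₀ _ (mul_ne_zero two_ne_zero (hD p))]
    have e2 : (Lt f ν p * Nt1 h ν₁ p - Mt h ν p ^ 2) =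
        Kg f ν h ν₁ p * (Et f p * Gt h p - Ft f h p ^ 2) := by
      unfold Kg
      rw [div_mul_cancel₀ _ (hD p)]
    rw [e1, e2]
    unfold kap
    generalize Real.sqrt _ = s at *
    generalize Hm f ν h ν₁ p = hh at *
    generalize Kg f ν h ν₁ p = kk at *
    linear_combination (Et f p * Gt h p - Ft f h p ^ 2) * s ^ 2 * hε2
      + (Et f p * Gt h p - Ft f h p ^ 2) * hs
  -- derivative of C
  have hC : ∀ p w, fderiv ℝ (Cf f ν h ν₁ ε) p w = fderiv ℝ f p w +
      (rho f ν h ν₁ ε p • fderiv ℝ ν p w + fderiv ℝ (rho f ν h ν₁ ε) p w • ν p) := by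
    intro p w
    have h5 : HasFDerivAt (Cf f ν h ν₁ ε) _ p :=
      (df p).hasFDerivAt.add ((dr p).hasFDerivAt.smul (dn p).hasFDerivAt)
    rw [h5.fderiv]
    simp
  have hCu : ∀ p, pu (Cf f ν h ν₁ ε) p = pu f p +
      (rho f ν h ν₁ ε p • pu ν p + pu (rho f ν h ν₁ ε) p • ν p) := fun p => hC p _
  have hCv : ∀ p, pv (Cf f ν h ν₁ ε) p = p.2 • h p +
      (rho f ν h ν₁ ε p • p.2 • ν₁ p + pv (rho f ν h ν₁ ε) p • ν p) := fun p => by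
    rw [← H.fv_eq, ← H.νv_eq]; exact hC p _
  have main : ∀ p : ℝ × ℝ,
      VD f ν h ν₁ ε (Cf f ν h ν₁ ε) p = VD f ν h ν₁ ε (rho f ν h ν₁ ε) p • ν p := by
    intro p
    have hrk : rho f ν h ν₁ ε p * kap f ν h ν₁ ε p = 1 := inv_mul_cancel₀ (hκ p)
    have hch := hchar p
    have hs := hsym p
    set w : R3 := (-(Mt h ν p - kap f ν h ν₁ ε p * Ft f h p)) •
        (pu f p + rho f ν h ν₁ ε p • pu ν p) +
      (Lt f ν p - kap f ν h ν₁ ε p * Et f p) • (h p + rho f ν h ν₁ ε p • ν₁ p) with hw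
    have hw0 : w = 0 := by
      apply aux_zero (H.indep p)
      · have e : dot3 (pu f p) w = (-(Mt h ν p - kap f ν h ν₁ ε p * Ft f h p)) *
            (Et f p - rho f ν h ν₁ ε p * Lt f ν p) +
            (Lt f ν p - kap f ν h ν₁ ε p * Et f p) *
            (Ft f h p + rho f ν h ν₁ ε p * dot3 (pu f p) (ν₁ p)) := by
          rw [hw]
          generalize kap f ν h ν₁ ε p = k
          generalize rho f ν h ν₁ ε p = r
          generalize hM : Mt h ν p = m
          simp [Et, Ft, Lt, dot3]; ring
        rw [e, show dot3 (pu f p) (ν₁ p) = - Mt h ν p by unfold Mt; linarith]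
        linear_combination (Mt h ν p * Et f p - Ft f h p * Lt f ν p) * hrk
      · have e : dot3 (h p) w = (-(Mt h ν p - kap f ν h ν₁ ε p * Ft f h p)) *
            (Ft f h p - rho f ν h ν₁ ε p * Mt h ν p) +
            (Lt f ν p - kap f ν h ν₁ ε p * Et f p) *
            (Gt h p - rho f ν h ν₁ ε p * Nt1 h ν₁ p) := by
          rw [hw]
          generalize kap f ν h ν₁ ε p = k
          generalize rho f ν h ν₁ ε p = r
          generalize hL : Lt f ν p = l
          generalize hE : Et f p = ee
          simp [Ft, Mt, Nt1, Gt, dot3]; ring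
        rw [e]
        linear_combination (-rho f ν h ν₁ ε p) * hch +
          (Mt h ν p * Ft f h p - Lt f ν p * Gt h p - kap f ν h ν₁ ε p * Ft f h p ^ 2
            + kap f ν h ν₁ ε p * Et f p * Gt h p) * hrk
      · have e : dot3 (ν p) w = (-(Mt h ν p - kap f ν h ν₁ ε p * Ft f h p)) *
            (dot3 (pu f p) (ν p) + rho f ν h ν₁ ε p * dot3 (ν p) (pu ν p)) +
            (Lt f ν p - kap f ν h ν₁ ε p * Et f p) *
            (dot3 (h p) (ν p) + rho f ν h ν₁ ε p * dot3 (ν p) (ν₁ p)) := by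
          rw [hw]
          generalize kap f ν h ν₁ ε p = k
          generalize rho f ν h ν₁ ε p = r
          generalize Lt f ν p = l
          generalize Et f p = ee
          generalize Mt h ν p = m
          generalize Ft f h p = ff
          simp [dot3]; ring
        rw [e, H.orth_fu_ν, hnnu, hhn, hnn1]; ring
    have key : VD f ν h ν₁ ε (Cf f ν h ν₁ ε) p =
        VD f ν h ν₁ ε (rho f ν h ν₁ ε) p • ν p + p.2 • w := by
      unfold VD
      rw [hCu, hCv, hw]
      unfold V1c V2c
      simp only [smul_eq_mul]
      module
    rw [key, hw0]; simp
  refine ⟨?_, main, fun p hp => by rw [main, hp, zero_smul]⟩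
  -- rank
  have hE0 : Et f (0, 0) = 1 := H.adapted_fu 0
  have hG0 : Gt h (0, 0) = 1 := H.adapted_h 0
  have hF0 : Ft f h (0, 0) = 0 := H.adapted_fu_h 0
  have hfuv : fderiv ℝ (pu f) (0, 0) (0, 1) = 0 := by
    rw [aux_symm_s12 H.smooth_f dh H.fv_eq]; simp
  have hnuv : fderiv ℝ (pu ν) (0, 0) (0, 1) = 0 := by
    rw [aux_symm_s12 H.smooth_ν dn1 H.νv_eq]; simp
  have dz : ∀ a : R3, dot3 a 0 = 0 ∧ dot3 0 a = 0 := fun a => by simp [dot3]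
  have hEv : pv (Et f) (0, 0) = 0 := by
    refine (aux_fderiv_dot_s12 dfu dfu (0, 0) (0, 1)).trans ?_
    rw [hfuv, (dz _).1, (dz _).2, add_zero]
  have hLv : pv (Lt f ν) (0, 0) = 0 := by
    have : pv (Lt f ν) (0, 0) = - fderiv ℝ (fun p => dot3 (pu f p) (pu ν p)) (0, 0) (0, 1) := by
      unfold pv Lt
      rw [fderiv_fun_neg]; rfl
    rw [this, aux_fderiv_dot_s12 dfu dnu, hfuv, hnuv, (dz _).1, (dz _).2]; simp
  have hFv : pv (Ft f h) (0, 0) = dot3 (pu f (0, 0)) (pv h (0, 0)) := by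
    refine (aux_fderiv_dot_s12 dfu dh (0, 0) (0, 1)).trans ?_
    rw [hfuv, (dz _).2, zero_add]; rfl
  have hGv : pv (Gt h) (0, 0) = 2 * dot3 (h (0, 0)) (pv h (0, 0)) := by
    refine (aux_fderiv_dot_s12 dh dh (0, 0) (0, 1)).trans ?_
    rw [aux_dot_comm (fderiv ℝ h _ _)]; unfold pv; ring
  have hMv : 2 * pv (Mt h ν) (0, 0) = 2 * pv (Ft f h) (0, 0) * Lt f ν (0, 0)
      + pv (Gt h) (0, 0) * Mt h ν (0, 0) := by
    have : pv (Mt h ν) (0, 0) = - fderiv ℝ (fun p => dot3 (h p) (pu ν p)) (0, 0) (0, 1) := by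
      unfold pv Mt
      rw [fderiv_fun_neg]; rfl
    have e := aux_exp (x := pv h (0, 0)) (y := pu ν (0, 0)) (H.adapted_fu 0) (H.adapted_h 0)
      (H.indep (0, 0)) (H.adapted_fu_h 0) (H.orth_fu_ν _) (hhn _) (hnnu _)
    rw [this, aux_fderiv_dot_s12 dh dnu, hnuv, (dz _).1, hFv, hGv]
    change 2 * -(dot3 (pv h (0, 0)) (pu ν (0, 0)) + 0) = _
    rw [e]
    unfold Lt Mt
    ring
  have hNv : pv (Nt1 h ν₁) (0, 0) = 2 * pv (Ft f h) (0, 0) * Mt h ν (0, 0) +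
      pv (Gt h) (0, 0) * Nt1 h ν₁ (0, 0) := by
    unfold rc at hrc; linarith
  have hkv : pv (kap f ν h ν₁ ε) (0, 0) = 0 := by
    have lE := aux_line dE
    have lF := aux_line dF
    have lG := aux_line dG
    have lL := aux_line dL
    have lM := aux_line dM
    have lN := aux_line dN
    have lk := aux_line dk
    have l1 := ((((lE.mul lG).sub (lF.pow 2)).mul (lk.pow 2)).sub
      ((((lE.mul lN).sub ((lF.const_mul 2).mul lM)).add (lG.mul lL)).mul lk)).add
      ((lL.mul lN).sub (lM.pow 2))
    have l2 : HasDerivAt (fun _ : ℝ => (0:ℝ)) _ 0 := l1.congr_of_eventuallyEq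
      (Filter.Eventually.of_forall fun t => (hchar (0, t)).symm)
    have l3 := l2.unique (hasDerivAt_const (0:ℝ) (0:ℝ))
    simp only [Pi.mul_apply, Pi.sub_apply, Pi.add_apply, Pi.pow_apply] at l3
    have hch := hchar (0, 0)
    have hkH : kap f ν h ν₁ ε (0, 0) - Hm f ν h ν₁ (0, 0) ≠ 0 := by
      have hp := Real.sqrt_pos.mpr (hHK (0, 0))
      have : ε ≠ 0 := by rcases hε with h | h <;> rw [h] <;> norm_num
      unfold kap
      rw [add_sub_cancel_left]
      exact mul_ne_zero this hp.ne'
    have hH0 : 2 * Hm f ν h ν₁ (0, 0) = Nt1 h ν₁ (0, 0) + Lt f ν (0, 0) := by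
      unfold Hm; rw [hE0, hG0, hF0]; ring
    rw [hE0, hG0, hF0] at hch
    rw [hEv, hLv, hE0, hF0, hG0, hNv] at l3
    refine (mul_eq_zero.mp ?_).resolve_left hkH
    norm_num at l3
    linear_combination (1/2) * l3 - (1/2) * pv (kap f ν h ν₁ ε) (0, 0) * hH0
      + (1/2) * Mt h ν (0, 0) * hMv - (1/2) * pv (Gt h) (0, 0) * hch
  have hrv : pv (rho f ν h ν₁ ε) (0, 0) = 0 := by
    have h1 := aux_line dr
    have h2 : HasDerivAt (fun t : ℝ => rho f ν h ν₁ ε (0, t)) _ 0 :=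
      (aux_line dk).inv (hκ (0, 0))
    rw [h1.unique h2, hkv]; simp
  have hv0 : fderiv ℝ (Cf f ν h ν₁ ε) 0 (0, 1) = 0 := by
    have := hCv (0, 0)
    rw [hrv] at this
    simp at this
    exact this
  have hu0 : pu (Cf f ν h ν₁ ε) 0 ≠ 0 := by
    intro h0
    have h1 := hCu (0, 0)
    rw [show ((0:ℝ), (0:ℝ)) = 0 from rfl, h0] at h1
    have h2 : dot3 (h 0) 0 = dot3 (pu f 0) (h 0) + rho f ν h ν₁ ε 0 * dot3 (h 0) (pu ν 0)
        + pu (rho f ν h ν₁ ε) 0 * dot3 (h 0) (ν 0) := by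
      rw [h1]
      generalize rho f ν h ν₁ ε 0 = r
      generalize pu (rho f ν h ν₁ ε) 0 = r'
      simp [dot3]; ring
    rw [(dz _).1, hhn, show dot3 (pu f 0) (h 0) = 0 from H.adapted_fu_h 0] at h2
    have h3 : rho f ν h ν₁ ε 0 * dot3 (h 0) (pu ν 0) = 0 := by linarith
    rcases mul_eq_zero.mp h3 with h4 | h4
    · exact inv_ne_zero (hκ 0) h4
    · apply hkt
      show - dot3 (h 0) (pu ν 0) = 0
      rw [h4]; simp
  unfold rankAt
  have hr : LinearMap.range (fderiv ℝ (Cf f ν h ν₁ ε) 0).toLinearMap =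
      Submodule.span ℝ {pu (Cf f ν h ν₁ ε) 0} := by
    ext y
    rw [LinearMap.mem_range, Submodule.mem_span_singleton]
    constructor
    · rintro ⟨x, rfl⟩
      refine ⟨x.1, ?_⟩
      have : x = x.1 • ((1:ℝ), (0:ℝ)) + x.2 • ((0:ℝ), (1:ℝ)) := by ext <;> simp
      conv_rhs => rw [this]
      simp only [ContinuousLinearMap.coe_coe, map_add, map_smul, hv0]
      simp [pu]
    · rintro ⟨a, rfl⟩
      refine ⟨a • ((1:ℝ), (0:ℝ)), ?_⟩
      simp only [ContinuousLinearMap.coe_coe, map_smul]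
      rfl
  rw [hr, finrank_span_singleton hu0]
end
end

section
/- Under the adapted pure-frontal setup with focal data, assume κ_t(0) ≠ 0 and that 0 is a V_j-ridge point of f, i.e. (V_jκ_j)(0) = 0. Then the gradient of the function V_jρ_j at 0 is nonzero (i.e. 0 is a non-degenerate singular point of the focal surface C_j) if and only if r_c'(0) ≠ 0 or (V_jV_jκ_j)(0) ≠ 0 (i.e. 0 is a first order V_j-ridge point of f). -/
open Filter

noncomputable section

theorem sm_pu {E : Type*} [NormedAddCommGroup E] [NormedSpace ℝ E] {g : ℝ × ℝ → E}
    (hg : ContDiff ℝ (⊤ : ℕ∞) g) : ContDiff ℝ (⊤ : ℕ∞) (pu g) := by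
  have h1 : ContDiff ℝ (⊤ : ℕ∞) (fderiv ℝ g) := hg.fderiv_right (by simp)
  exact h1.clm_apply contDiff_const

theorem sm_pv {E : Type*} [NormedAddCommGroup E] [NormedSpace ℝ E] {g : ℝ × ℝ → E}
    (hg : ContDiff ℝ (⊤ : ℕ∞) g) : ContDiff ℝ (⊤ : ℕ∞) (pv g) := by
  have h1 : ContDiff ℝ (⊤ : ℕ∞) (fderiv ℝ g) := hg.fderiv_right (by simp)
  exact h1.clm_apply contDiff_const

theorem sm_dot {a b : ℝ × ℝ → R3} (ha : ContDiff ℝ (⊤ : ℕ∞) a) (hb : ContDiff ℝ (⊤ : ℕ∞) b) :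
    ContDiff ℝ (⊤ : ℕ∞) (fun p => dot3 (a p) (b p)) := by
  rw [contDiff_pi] at ha hb
  unfold dot3
  exact (((ha 0).mul (hb 0)).add ((ha 1).mul (hb 1))).add ((ha 2).mul (hb 2))

theorem hd_v {E : Type*} [NormedAddCommGroup E] [NormedSpace ℝ E] {g : ℝ × ℝ → E}
    (hg : ContDiff ℝ (⊤ : ℕ∞) g) (u v : ℝ) : HasDerivAt (fun t => g (u, t)) (pv g (u, v)) v := by
  have h1 : HasFDerivAt g (fderiv ℝ g (u, v)) (u, v) :=
    (hg.differentiable (by simp) (u, v)).hasFDerivAt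
  have h2 : HasDerivAt (fun t : ℝ => (u, t)) ((0 : ℝ), (1 : ℝ)) v :=
    (hasDerivAt_const v u).prodMk (hasDerivAt_id v)
  exact h1.comp_hasDerivAt v h2

theorem hd_u {E : Type*} [NormedAddCommGroup E] [NormedSpace ℝ E] {g : ℝ × ℝ → E}
    (hg : ContDiff ℝ (⊤ : ℕ∞) g) (u v : ℝ) : HasDerivAt (fun t => g (t, v)) (pu g (u, v)) u := by
  have h1 : HasFDerivAt g (fderiv ℝ g (u, v)) (u, v) :=
    (hg.differentiable (by simp) (u, v)).hasFDerivAt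
  have h2 : HasDerivAt (fun t : ℝ => (t, v)) ((1 : ℝ), (0 : ℝ)) u :=
    (hasDerivAt_id u).prodMk (hasDerivAt_const u v)
  exact h1.comp_hasDerivAt u h2

theorem hd_dot {a b : ℝ → R3} {a' b' : R3} {t : ℝ} (ha : HasDerivAt a a' t)
    (hb : HasDerivAt b b' t) :
    HasDerivAt (fun s => dot3 (a s) (b s)) (dot3 a' (b t) + dot3 (a t) b') t := by
  rw [hasDerivAt_pi] at ha hb
  have := (((ha 0).mul (hb 0)).add ((ha 1).mul (hb 1))).add ((ha 2).mul (hb 2))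
  unfold dot3
  refine this.congr_deriv ?_
  ring

theorem mixed {g k : ℝ × ℝ → R3} (hg : ContDiff ℝ (⊤ : ℕ∞) g) (hk : ContDiff ℝ (⊤ : ℕ∞) k)
    (e : ∀ p : ℝ × ℝ, pv g p = p.2 • k p) (u : ℝ) : pv (pu g) (u, 0) = 0 := by
  have h1 : Differentiable ℝ (fderiv ℝ g) :=
    (hg.fderiv_right (m := (⊤ : ℕ∞)) (by simp)).differentiable (by simp)
  have hs : IsSymmSndFDerivAt ℝ g (u, 0) :=
    hg.contDiffAt.isSymmSndFDerivAt (by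
      simp only [minSmoothness_of_isRCLikeNormedField]
      exact WithTop.coe_le_coe.mpr (le_top : (2 : ℕ∞) ≤ ⊤))
  have e1 : pv (pu g) (u, 0) = pu (pv g) (u, 0) := by
    have a1 : ∀ w : ℝ × ℝ, fderiv ℝ (fun p => fderiv ℝ g p w) (u, 0) =
        (fderiv ℝ (fderiv ℝ g) (u, 0)).flip w := by
      intro w
      rw [fderiv_clm_apply (h1 _) (differentiableAt_const _)]
      simp
    have b1 : pv (pu g) (u, 0) = fderiv ℝ (fun p => fderiv ℝ g p (1, 0)) (u, 0) (0, 1) := rfl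
    have b2 : pu (pv g) (u, 0) = fderiv ℝ (fun p => fderiv ℝ g p (0, 1)) (u, 0) (1, 0) := rfl
    rw [b1, b2, a1, a1]
    exact hs.eq _ _
  rw [e1]
  have h3 := hd_u (sm_pv hg) u 0
  have h4 : (fun t : ℝ => pv g (t, 0)) = fun _ => 0 := by
    funext t; rw [e]; simp
  rw [h4] at h3
  exact h3.unique (hasDerivAt_const _ _)

theorem parseval {a b c : R3} (aa : dot3 a a = 1) (bb : dot3 b b = 1) (cc : dot3 c c = 1)
    (ab : dot3 a b = 0) (ac : dot3 a c = 0) (bc : dot3 b c = 0) (x y : R3) :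
    dot3 x y = dot3 x a * dot3 a y + dot3 x b * dot3 b y + dot3 x c * dot3 c y := by
  unfold dot3 at *
  have h1 : (!![a 0, a 1, a 2; b 0, b 1, b 2; c 0, c 1, c 2] : Matrix (Fin 3) (Fin 3) ℝ) *
      !![a 0, b 0, c 0; a 1, b 1, c 1; a 2, b 2, c 2] = 1 := by
    ext i j
    fin_cases i <;> fin_cases j <;> simp [Matrix.mul_apply, Fin.sum_univ_three] <;> linarith
  have h2 := mul_eq_one_comm.mp h1
  have g := fun i j => congrFun (congrFun h2 i) j
  have g00 := g 0 0
  have g01 := g 0 1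
  have g02 := g 0 2
  have g11 := g 1 1
  have g12 := g 1 2
  have g22 := g 2 2
  simp [Matrix.mul_apply, Fin.sum_univ_three] at g00 g01 g02 g11 g12 g22
  linear_combination (-(x 0 * y 0)) * g00 - (x 1 * y 1) * g11 - (x 2 * y 2) * g22
    - (x 0 * y 1 + x 1 * y 0) * g01 - (x 0 * y 2 + x 2 * y 0) * g02 - (x 1 * y 2 + x 2 * y 1) * g12

theorem dot_zero {w : R3} (hw : dot3 w w = 0) : w = 0 := by
  unfold dot3 at hw
  have h0 : w 0 = 0 := by nlinarith [sq_nonneg (w 0), sq_nonneg (w 1), sq_nonneg (w 2)]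
  have h1 : w 1 = 0 := by nlinarith [sq_nonneg (w 0), sq_nonneg (w 1), sq_nonneg (w 2)]
  have h2 : w 2 = 0 := by nlinarith [sq_nonneg (w 0), sq_nonneg (w 1), sq_nonneg (w 2)]
  ext i
  fin_cases i <;> simp [h0, h1, h2]

theorem D_ne {a b c : R3} (hi : LinearIndependent ℝ ![a, b, c]) :
    dot3 a a * dot3 b b - dot3 a b ^ 2 ≠ 0 := by
  intro hD
  have hb : dot3 b b ≠ 0 := by
    intro h0
    exact hi.ne_zero 1 (dot_zero h0)
  have hw : dot3 b b • a + (-dot3 a b) • b = 0 := by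
    apply dot_zero
    have : dot3 (dot3 b b • a + (-dot3 a b) • b) (dot3 b b • a + (-dot3 a b) • b) =
        dot3 b b * (dot3 a a * dot3 b b - dot3 a b ^ 2) := by
      simp only [dot3, Pi.add_apply, Pi.smul_apply, smul_eq_mul]
      ring
    rw [this, hD, mul_zero]
  have := Fintype.linearIndependent_iff.mp hi ![dot3 b b, -dot3 a b, 0]
    (by simpa [Fin.sum_univ_three] using hw) 0
  exact hb (by simpa using this)

/-- if κ_t(0) ≠ 0 and 0 is a V_j-ridge point, then 0 is a
non-degenerate singular point of C_j (the gradient of V_jρ_j at 0 is nonzero) iff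
r_c'(0) ≠ 0 or 0 is a first order V_j-ridge point ((V_jV_jκ_j)(0) ≠ 0). -/
theorem stmt_14 (f ν h ν₁ : ℝ × ℝ → R3) (H : AdaptedPureFrontal f ν h ν₁)
    (ε : ℝ) (hε : ε = 1 ∨ ε = -1)
    (hHK : ∀ p : ℝ × ℝ, Hm f ν h ν₁ p ^ 2 - Kg f ν h ν₁ p > 0)
    (hκ : ∀ p : ℝ × ℝ, kap f ν h ν₁ ε p ≠ 0)
    (hkt : kt h ν 0 ≠ 0)
    (hridge : VD f ν h ν₁ ε (kap f ν h ν₁ ε) 0 = 0) :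
    (pu (VD f ν h ν₁ ε (rho f ν h ν₁ ε)) 0 ≠ 0 ∨
        pv (VD f ν h ν₁ ε (rho f ν h ν₁ ε)) 0 ≠ 0) ↔
      (deriv (rc f ν h ν₁) 0 ≠ 0 ∨
        VD f ν h ν₁ ε (VD f ν h ν₁ ε (kap f ν h ν₁ ε)) 0 ≠ 0) := by
  have sE : ContDiff ℝ (⊤ : ℕ∞) (Et f) := sm_dot (sm_pu H.smooth_f) (sm_pu H.smooth_f)
  have sF : ContDiff ℝ (⊤ : ℕ∞) (Ft f h) := sm_dot (sm_pu H.smooth_f) H.smooth_h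
  have sG : ContDiff ℝ (⊤ : ℕ∞) (Gt h) := sm_dot H.smooth_h H.smooth_h
  have sL : ContDiff ℝ (⊤ : ℕ∞) (Lt f ν) := (sm_dot (sm_pu H.smooth_f) (sm_pu H.smooth_ν)).neg
  have sM : ContDiff ℝ (⊤ : ℕ∞) (Mt h ν) := (sm_dot H.smooth_h (sm_pu H.smooth_ν)).neg
  have sN : ContDiff ℝ (⊤ : ℕ∞) (Nt1 h ν₁) := (sm_dot H.smooth_h H.smooth_ν₁).neg
  have D0 : ∀ p, Et f p * Gt h p - Ft f h p ^ 2 ≠ 0 := fun p => D_ne (H.indep p)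
  have sD : ContDiff ℝ (⊤ : ℕ∞) (fun p => Et f p * Gt h p - Ft f h p ^ 2) :=
    (sE.mul sG).sub (sF.pow 2)
  have sK : ContDiff ℝ (⊤ : ℕ∞) (Kg f ν h ν₁) :=
    ((sL.mul sN).sub (sM.pow 2)).div sD D0
  have sH : ContDiff ℝ (⊤ : ℕ∞) (Hm f ν h ν₁) :=
    (((sE.mul sN).sub ((contDiff_const.mul sF).mul sM)).add (sG.mul sL)).div
      (contDiff_const.mul sD) (fun p => mul_ne_zero two_ne_zero (D0 p))
  have sk : ContDiff ℝ (⊤ : ℕ∞) (kap f ν h ν₁ ε) :=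
    sH.add (contDiff_const.mul (((sH.pow 2).sub sK).sqrt (fun p => (hHK p).ne')))
  have sr : ContDiff ℝ (⊤ : ℕ∞) (rho f ν h ν₁ ε) := sk.inv hκ
  have sV1 : ContDiff ℝ (⊤ : ℕ∞) (V1c f ν h ν₁ ε) :=
    (contDiff_snd.mul (sM.sub (sk.mul sF))).neg
  have sV2 : ContDiff ℝ (⊤ : ℕ∞) (V2c f ν h ν₁ ε) := sL.sub (sk.mul sE)
  have sVk : ContDiff ℝ (⊤ : ℕ∞) (VD f ν h ν₁ ε (kap f ν h ν₁ ε)) :=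
    (sV1.smul (sm_pu sk)).add (sV2.smul (sm_pv sk))
  have sVr : ContDiff ℝ (⊤ : ℕ∞) (VD f ν h ν₁ ε (rho f ν h ν₁ ε)) :=
    (sV1.smul (sm_pu sr)).add (sV2.smul (sm_pv sr))
  have hε2 : ε ^ 2 = 1 := by rcases hε with h | h <;> rw [h] <;> norm_num
  -- quadratic equation
  have quad : ∀ p, (Et f p * Gt h p - Ft f h p ^ 2) * kap f ν h ν₁ ε p ^ 2
      - (Et f p * Nt1 h ν₁ p - 2 * Ft f h p * Mt h ν p + Gt h p * Lt f ν p) * kap f ν h ν₁ ε p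
      + (Lt f ν p * Nt1 h ν₁ p - Mt h ν p ^ 2) = 0 := by
    intro p
    have q1 : kap f ν h ν₁ ε p ^ 2 - 2 * Hm f ν h ν₁ p * kap f ν h ν₁ ε p + Kg f ν h ν₁ p = 0 := by
      have := Real.sq_sqrt (hHK p).le
      unfold kap
      linear_combination ε ^ 2 * this + (Hm f ν h ν₁ p ^ 2 - Kg f ν h ν₁ p) * hε2
    have q2 : 2 * Hm f ν h ν₁ p * (Et f p * Gt h p - Ft f h p ^ 2) =
        Et f p * Nt1 h ν₁ p - 2 * Ft f h p * Mt h ν p + Gt h p * Lt f ν p := by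
      unfold Hm
      have := D0 p
      field_simp
    have q3 : Kg f ν h ν₁ p * (Et f p * Gt h p - Ft f h p ^ 2) =
        Lt f ν p * Nt1 h ν₁ p - Mt h ν p ^ 2 := by
      unfold Kg
      exact div_mul_cancel₀ _ (D0 p)
    linear_combination (Et f p * Gt h p - Ft f h p ^ 2) * q1 + kap f ν h ν₁ ε p * q2 - q3
  have E1 : ∀ u : ℝ, Et f (u, 0) = 1 := H.adapted_fu
  have F0 : ∀ u : ℝ, Ft f h (u, 0) = 0 := H.adapted_fu_h
  have G1 : ∀ u : ℝ, Gt h (u, 0) = 1 := H.adapted_h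
  have fuv : ∀ u : ℝ, pv (pu f) (u, 0) = 0 := mixed H.smooth_f H.smooth_h H.fv_eq
  have nuv : ∀ u : ℝ, pv (pu ν) (u, 0) = 0 := mixed H.smooth_ν H.smooth_ν₁ H.νv_eq
  have z1 : ∀ x, dot3 0 x = 0 := by intro x; simp [dot3]
  have z2 : ∀ x, dot3 x 0 = 0 := by intro x; simp [dot3]
  have cm : ∀ x y, dot3 x y = dot3 y x := by intro x y; simp only [dot3]; ring
  have Ev : ∀ u : ℝ, pv (Et f) (u, 0) = 0 := by
    intro u
    have a := hd_v (sm_pu H.smooth_f) u 0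
    rw [(hd_v sE u 0).unique (hd_dot a a), fuv, z1, z2, add_zero]
  have Lv : ∀ u : ℝ, pv (Lt f ν) (u, 0) = 0 := by
    intro u
    have a := hd_v (sm_pu H.smooth_f) u 0
    have b := hd_v (sm_pu H.smooth_ν) u 0
    rw [(hd_v sL u 0).unique (hd_dot a b).neg, fuv, nuv, z1, z2, add_zero, neg_zero]
  have Fv : ∀ u : ℝ, pv (Ft f h) (u, 0) = dot3 (pu f (u, 0)) (pv h (u, 0)) := by
    intro u
    have a := hd_v (sm_pu H.smooth_f) u 0
    have b := hd_v H.smooth_h u 0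
    rw [(hd_v sF u 0).unique (hd_dot a b), fuv, z1, zero_add]
  have Gv : ∀ u : ℝ, pv (Gt h) (u, 0) = 2 * dot3 (pv h (u, 0)) (h (u, 0)) := by
    intro u
    have b := hd_v H.smooth_h u 0
    rw [(hd_v sG u 0).unique (hd_dot b b), cm (h (u, 0))]; ring
  have nnu : ∀ u : ℝ, dot3 (ν (u, 0)) (pu ν (u, 0)) = 0 := by
    intro u
    have a := hd_u H.smooth_ν u 0
    have b := hd_dot a a
    have c : (fun s : ℝ => dot3 (ν (s, 0)) (ν (s, 0))) = fun _ => 1 := by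
      funext s; exact H.unit_ν _
    rw [c] at b
    have d := b.unique (hasDerivAt_const _ _)
    rw [cm (pu ν (u, 0))] at d
    linarith
  have Mv : ∀ u : ℝ, pv (Mt h ν) (u, 0) =
      Lt f ν (u, 0) * pv (Ft f h) (u, 0) + Mt h ν (u, 0) * pv (Gt h) (u, 0) / 2 := by
    intro u
    have a := hd_v H.smooth_h u 0
    have b := hd_v (sm_pu H.smooth_ν) u 0
    rw [(hd_v sM u 0).unique (hd_dot a b).neg, nuv, z2, add_zero,
      parseval (H.adapted_fu u) (H.adapted_h u) (H.unit_ν (u, 0)) (H.adapted_fu_h u)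
        (H.orth_fu_ν (u, 0)) (H.adapted_h_ν u) (pv h (u, 0)) (pu ν (u, 0)), nnu, Fv, Gv,
      cm (pv h (u, 0)) (pu f (u, 0))]
    unfold Lt Mt
    ring
  -- derivative of the quadratic equation
  have key : ∀ u : ℝ, (2 * kap f ν h ν₁ ε (u, 0) - Lt f ν (u, 0) - Nt1 h ν₁ (u, 0)) *
      pv (kap f ν h ν₁ ε) (u, 0) =
      (kap f ν h ν₁ ε (u, 0) - Lt f ν (u, 0)) * (rc f ν h ν₁ u / 24) := by
    intro u
    have dE := hd_v sE u 0
    have dF := hd_v sF u 0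
    have dG := hd_v sG u 0
    have dL := hd_v sL u 0
    have dM := hd_v sM u 0
    have dN := hd_v sN u 0
    have dk := hd_v sk u 0
    have t := ((((dE.mul dG).sub (dF.pow 2)).mul (dk.pow 2)).sub
      ((((dE.mul dN).sub ((dF.const_mul 2).mul dM)).add (dG.mul dL)).mul dk)).add
      ((dL.mul dN).sub (dM.pow 2))
    have t2 := t.unique ((hasDerivAt_const (0 : ℝ) (0 : ℝ)).congr_of_eventuallyEq
      (Eventually.of_forall (fun s => quad (u, s))))
    have q := quad (u, 0)
    simp only [Pi.mul_apply, Pi.sub_apply, Pi.pow_apply, Pi.add_apply] at t2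
    simp only [Ev, Lv, Mv, E1, F0, G1] at t2 q
    norm_num at t2 q
    unfold rc
    linear_combination t2 - pv (Gt h) (u, 0) * q
  have A0 : ∀ u : ℝ, 2 * kap f ν h ν₁ ε (u, 0) - Lt f ν (u, 0) - Nt1 h ν₁ (u, 0) ≠ 0 := by
    intro u
    have e : 2 * kap f ν h ν₁ ε (u, 0) - Lt f ν (u, 0) - Nt1 h ν₁ (u, 0) =
        2 * ε * Real.sqrt (Hm f ν h ν₁ (u, 0) ^ 2 - Kg f ν h ν₁ (u, 0)) := by
      have : Hm f ν h ν₁ (u, 0) = (Nt1 h ν₁ (u, 0) + Lt f ν (u, 0)) / 2 := by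
        unfold Hm; rw [E1, F0, G1]; norm_num
      unfold kap
      linear_combination 2 * this
    rw [e]
    have h1 := (Real.sqrt_pos.mpr (hHK (u, 0))).ne'
    have h2 : ε ≠ 0 := by rintro rfl; norm_num at hε2
    positivity
  have kL : kap f ν h ν₁ ε (0, 0) - Lt f ν (0, 0) ≠ 0 := by
    intro h0
    have q := quad (0, 0)
    simp only [E1, F0, G1] at q
    have : Mt h ν (0, 0) ^ 2 = 0 := by
      linear_combination -q + (kap f ν h ν₁ ε (0, 0) - Nt1 h ν₁ (0, 0)) * h0
    exact hkt (pow_eq_zero_iff two_ne_zero |>.mp this)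
  -- value of V κ on the axis
  have axis : ∀ u : ℝ, VD f ν h ν₁ ε (kap f ν h ν₁ ε) (u, 0) *
      (2 * kap f ν h ν₁ ε (u, 0) - Lt f ν (u, 0) - Nt1 h ν₁ (u, 0)) =
      -(kap f ν h ν₁ ε (u, 0) - Lt f ν (u, 0)) ^ 2 * (rc f ν h ν₁ u / 24) := by
    intro u
    unfold VD V1c V2c
    rw [E1]
    simp only [smul_eq_mul]
    linear_combination (Lt f ν (u, 0) - kap f ν h ν₁ ε (u, 0)) * key u
  have z00 : (0 : ℝ × ℝ) = (0, 0) := rfl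
  rw [z00] at hridge ⊢
  have rc0 : rc f ν h ν₁ 0 = 0 := by
    have a := axis 0
    rw [hridge, zero_mul] at a
    have b := (mul_eq_zero.mp a.symm).resolve_left (neg_ne_zero.mpr (pow_ne_zero 2 kL))
    linarith
  have drc : HasDerivAt (rc f ν h ν₁) (deriv (rc f ν h ν₁) 0) 0 := by
    have x := (((hd_u (sm_pv sN) 0 0).sub (((hd_u (sm_pv sF) 0 0).const_mul 2).mul
      (hd_u sM 0 0))).sub ((hd_u (sm_pv sG) 0 0).mul (hd_u sN 0 0))).const_mul 24
    exact (HasDerivAt.differentiableAt (f := rc f ν h ν₁) x).hasDerivAt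
  have dk0 := hd_u sk 0 0
  have dL0 := hd_u sL 0 0
  have dN0 := hd_u sN 0 0
  have dV0 := hd_u sVk 0 0
  have lhs := dV0.mul (((dk0.const_mul 2).sub dL0).sub dN0)
  have rhs := (((dk0.sub dL0).pow 2).neg).mul (drc.div_const 24)
  have grad := lhs.unique (rhs.congr_of_eventuallyEq (Eventually.of_forall (fun s => axis s)))
  simp only [Pi.mul_apply, Pi.sub_apply, Pi.pow_apply, Pi.add_apply, Pi.neg_apply] at grad
  rw [hridge, rc0] at grad
  simp only [zero_mul, add_zero, zero_div, mul_zero, zero_add] at grad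
  have A00 := A0 0
  have iu : pu (VD f ν h ν₁ ε (kap f ν h ν₁ ε)) (0, 0) = 0 ↔ deriv (rc f ν h ν₁) 0 = 0 := by
    constructor
    · intro e
      rw [e, zero_mul] at grad
      have b := (mul_eq_zero.mp grad.symm).resolve_left (neg_ne_zero.mpr (pow_ne_zero 2 kL))
      linarith
    · intro e
      rw [e, zero_div, mul_zero] at grad
      exact (mul_eq_zero.mp grad).resolve_right A00
  have iv : VD f ν h ν₁ ε (VD f ν h ν₁ ε (kap f ν h ν₁ ε)) (0, 0) = 0 ↔
      pv (VD f ν h ν₁ ε (kap f ν h ν₁ ε)) (0, 0) = 0 := by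
    have e : VD f ν h ν₁ ε (VD f ν h ν₁ ε (kap f ν h ν₁ ε)) (0, 0) =
        -(kap f ν h ν₁ ε (0, 0) - Lt f ν (0, 0)) *
          pv (VD f ν h ν₁ ε (kap f ν h ν₁ ε)) (0, 0) := by
      conv_lhs => unfold VD V1c V2c
      rw [E1]
      simp only [smul_eq_mul]
      unfold VD V1c V2c
      simp only [smul_eq_mul]
      ring
    rw [e, mul_eq_zero]
    exact or_iff_right (neg_ne_zero.mpr kL)
  -- V ρ in terms of V κ
  have pr : ∀ p : ℝ × ℝ, VD f ν h ν₁ ε (rho f ν h ν₁ ε) p * kap f ν h ν₁ ε p ^ 2 =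
      - VD f ν h ν₁ ε (kap f ν h ν₁ ε) p := by
    rintro ⟨u, v⟩
    have a1 := (hd_u sr u v).unique ((hd_u sk u v).inv (hκ _))
    have a2 := (hd_v sr u v).unique ((hd_v sk u v).inv (hκ _))
    have := hκ (u, v)
    unfold VD
    rw [a1, a2]
    simp only [smul_eq_mul]
    field_simp
    ring
  have k00 := pow_ne_zero 2 (hκ (0, 0))
  have r0 : VD f ν h ν₁ ε (rho f ν h ν₁ ε) (0, 0) = 0 := by
    have := pr (0, 0)
    rw [hridge, neg_zero] at this
    exact (mul_eq_zero.mp this).resolve_right k00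
  have ju : pu (VD f ν h ν₁ ε (rho f ν h ν₁ ε)) (0, 0) * kap f ν h ν₁ ε (0, 0) ^ 2 =
      -pu (VD f ν h ν₁ ε (kap f ν h ν₁ ε)) (0, 0) := by
    have a := ((hd_u sVr 0 0).mul ((hd_u sk 0 0).pow 2)).unique
      ((hd_u sVk 0 0).neg.congr_of_eventuallyEq (Eventually.of_forall (fun s => pr (s, 0))))
    simpa [r0] using a
  have jv : pv (VD f ν h ν₁ ε (rho f ν h ν₁ ε)) (0, 0) * kap f ν h ν₁ ε (0, 0) ^ 2 =
      -pv (VD f ν h ν₁ ε (kap f ν h ν₁ ε)) (0, 0) := by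
    have a := ((hd_v sVr 0 0).mul ((hd_v sk 0 0).pow 2)).unique
      ((hd_v sVk 0 0).neg.congr_of_eventuallyEq (Eventually.of_forall (fun s => pr (0, s))))
    simpa [r0] using a
  have cu : pu (VD f ν h ν₁ ε (rho f ν h ν₁ ε)) (0, 0) = 0 ↔
      pu (VD f ν h ν₁ ε (kap f ν h ν₁ ε)) (0, 0) = 0 := by
    rw [← neg_eq_zero (a := pu (VD f ν h ν₁ ε (kap f ν h ν₁ ε)) (0, 0)), ← ju, mul_eq_zero]
    exact (or_iff_left k00).symm
  have cv : pv (VD f ν h ν₁ ε (rho f ν h ν₁ ε)) (0, 0) = 0 ↔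
      pv (VD f ν h ν₁ ε (kap f ν h ν₁ ε)) (0, 0) = 0 := by
    rw [← neg_eq_zero (a := pv (VD f ν h ν₁ ε (kap f ν h ν₁ ε)) (0, 0)), ← jv, mul_eq_zero]
    exact (or_iff_left k00).symm
  exact or_congr (not_congr (cu.trans iu)) (not_congr (cv.trans iv.symm))
end
end
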